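/- arXiv:2010.00653 — 4 statements merged into one kernel-verified Lean document; each statement's English description precedes it below -/
import Mathlib

section
/- Let K be a field, let n >= 1, and let M be a monomial in K[u_{ij} : n >= i > j >= 1]. Then there exists z in FPF_n(I_n) such that r^ss_M(i,j) = r_z(i,j) for all i,j in [n]. -/
namespace Paper

/-!
We model a permutation of the positive integers `{1, 2, 3, ...}` as an `Equiv.Perm ℕ`
that fixes `0`; all notions below refer only to positive inputs.
-/

/-- The rank `r_w(i,j) = #{a ∈ [i] : w(a) ∈ [j]}` of the `i × j` partial
permutation matrix of `w`, where `[k] = {1, ..., k}`. -/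
def rnk (w : Equiv.Perm ℕ) (i j : ℕ) : ℕ :=
  ((Finset.Icc 1 i).filter fun a => w a ∈ Finset.Icc 1 j).card

/-- Right descent set `Des_R(w) = {i ≥ 1 : w(i) > w(i+1)}`. -/
def DesR (w : Equiv.Perm ℕ) : Set ℕ := {i | 1 ≤ i ∧ w (i + 1) < w i}

/-- Left descent set `Des_L(w) = Des_R(w⁻¹)`. -/
def DesL (w : Equiv.Perm ℕ) : Set ℕ := DesR w⁻¹

/-- `S_∞`: permutations of the positive integers fixing all but finitely many points. -/
def SInfty : Set (Equiv.Perm ℕ) :=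
  {w | w 0 = 0 ∧ Set.Finite {i : ℕ | w i ≠ i}}

/-- `S^{m,n}_∞ = {w ∈ S_∞ : Des_R(w) ⊆ [m], Des_L(w) ⊆ [n]}`. -/
def SmnInfty (m n : ℕ) : Set (Equiv.Perm ℕ) :=
  {w | w ∈ SInfty ∧ DesR w ⊆ Set.Icc 1 m ∧ DesL w ⊆ Set.Icc 1 n}

/-- The Rothe diagram `D(w) = {(i,j) : 0 < j < w(i), 0 < i < w⁻¹(j)}`. -/
def Rothe (w : Equiv.Perm ℕ) : Set (ℕ × ℕ) :=
  {p | 0 < p.2 ∧ p.2 < w p.1 ∧ 0 < p.1 ∧ p.1 < w⁻¹ p.2}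

/-- The function `1_FPF`, sending `i ↦ i - (-1)^i` on positive integers (it fixes `0`). -/
def oneFPF : ℕ → ℕ := fun i => if i % 2 = 1 then i + 1 else i - 1

/-- `I^FPF_∞`: fixed-point-free involutions of the positive integers agreeing with
`1_FPF` at all sufficiently large inputs. -/
def IFPFInfty : Set (Equiv.Perm ℕ) :=
  {z | z 0 = 0 ∧ (∀ i, 1 ≤ i → z i ≠ i) ∧ z * z = 1 ∧ ∃ N, ∀ i, N ≤ i → z i = oneFPF i}

/-- The skew-symmetric Rothe diagram `D^ss(z) = {(i,j) : 0 < j < z(i), j < i < z(j)}`. -/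
def Dss (z : Equiv.Perm ℕ) : Set (ℕ × ℕ) :=
  {p | 0 < p.2 ∧ p.2 < z p.1 ∧ p.2 < p.1 ∧ p.1 < z p.2}

/-- `FPF_n(I_n) = {z ∈ I^FPF_∞ : D^ss(z) ⊆ [n] × [n]}`. -/
def FPFIn (n : ℕ) : Set (Equiv.Perm ℕ) :=
  {z | z ∈ IFPFInfty ∧ Dss z ⊆ Set.Icc 1 n ×ˢ Set.Icc 1 n}

/-- `ℓ_fpf(z) = |D^ss(z)|`. -/
noncomputable def ellFpf (z : Equiv.Perm ℕ) : ℕ := (Dss z).ncard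

/-- Bruhat order on `I^FPF_∞`: reflexive-transitive closure of `z < (i,j) z (i,j)`
whenever `i < j` and `ℓ_fpf` goes up by exactly one. -/
def fpfBruhatLe (z y : Equiv.Perm ℕ) : Prop :=
  Relation.ReflTransGen
    (fun a b => ∃ i j : ℕ, 1 ≤ i ∧ i < j ∧
      b = Equiv.swap i j * a * Equiv.swap i j ∧ ellFpf b = ellFpf a + 1) z y

/-- `i` is a visible descent of `z` if `i ≥ 1` and `z(i+1) < min(i, z(i))`. -/
def visibleDescent (z : Equiv.Perm ℕ) (i : ℕ) : Prop :=
  1 ≤ i ∧ z (i + 1) < min i (z i)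

/-- `Ψ(z, p) = {(p,r) z (p,r) : r > p, ℓ_fpf((p,r) z (p,r)) = ℓ_fpf(z) + 1}`. -/
def PsiSet (z : Equiv.Perm ℕ) (p : ℕ) : Set (Equiv.Perm ℕ) :=
  {y | ∃ r : ℕ, p < r ∧ y = Equiv.swap p r * z * Equiv.swap p r ∧ ellFpf y = ellFpf z + 1}

/-- The dominant component `dom(z) = {(i,j) : i, j ≥ 1, r_z(i,j) = 0}`. -/
def domSet (z : Equiv.Perm ℕ) : Set (ℕ × ℕ) :=
  {p | 1 ≤ p.1 ∧ 1 ≤ p.2 ∧ rnk z p.1 p.2 = 0}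

/-- `(p, q)` is an outer corner of `dom(z)`. -/
def IsOuterCorner (z : Equiv.Perm ℕ) (p q : ℕ) : Prop :=
  1 ≤ p ∧ 1 ≤ q ∧ (p, q) ∉ domSet z ∧
    (p = 1 ∨ (p - 1, q) ∈ domSet z) ∧ (q = 1 ∨ (p, q - 1) ∈ domSet z)

/-- `I_n`: involutions in `S_∞` fixing every `i > n`. -/
def InvolIn (n : ℕ) : Set (Equiv.Perm ℕ) :=
  {w | w 0 = 0 ∧ w * w = 1 ∧ ∀ i, n < i → w i = i}

/-- The fixed points of `z` lying in `[n]`. -/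
def fixedPtsIn (n : ℕ) (z : Equiv.Perm ℕ) : Finset ℕ :=
  (Finset.Icc 1 n).filter fun i => z i = i

/-- The function swapping `m + 2t - 1` and `m + 2t` for every `t ≥ 1`, fixing all other points. -/
def tailSwapFun (m : ℕ) : ℕ → ℕ := fun i =>
  if i ≤ m then i else if (i - m) % 2 = 1 then i + 1 else i - 1

theorem tailSwapFun_involutive (m : ℕ) : Function.Involutive (tailSwapFun m) := by
  intro i
  unfold tailSwapFun
  split_ifs <;> omega

/-- The involution swapping `m + 2t - 1` and `m + 2t` for every `t ≥ 1`. -/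
def tailSwap (m : ℕ) : Equiv.Perm ℕ :=
  Function.Involutive.toPerm _ (tailSwapFun_involutive m)

/-- The fixed-point-free standardization `FPF_n(z) = z ⋅ (i_1,n+1)⋯(i_k,n+k) ⋅ c`,
where `i_1 < ⋯ < i_k` are the fixed points of `z` in `[n]` and `c` swaps
`n+k+2t-1, n+k+2t` for all `t ≥ 1`. -/
noncomputable def fpfStd (n : ℕ) (z : Equiv.Perm ℕ) : Equiv.Perm ℕ :=
  z *
    (List.ofFn fun t : Fin (fixedPtsIn n z).card =>
      Equiv.swap ((fixedPtsIn n z).orderEmbOfFin rfl t) (n + (t : ℕ) + 1)).prod *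
    tailSwap (n + (fixedPtsIn n z).card)

/-- `Mat^ss_n(K)`: skew-symmetric `n × n` matrices (transpose is the negative, zero diagonal).
Row/column index `a : Fin n` corresponds to the (1-indexed) row/column `a + 1`. -/
def MatSS (K : Type*) [CommRing K] (n : ℕ) : Set (Matrix (Fin n) (Fin n) K) :=
  {A | A.transpose = -A ∧ ∀ i, A i i = 0}

/-- The skew-symmetric matrix Schubert variety
`X^ss_z = {A ∈ Mat^ss_n : rank A_{[i][j]} ≤ r_z(i,j) for all i, j ∈ [n]}`. -/
noncomputable def Xss (K : Type*) [Field K] (n : ℕ) (z : Equiv.Perm ℕ) :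
    Set (Matrix (Fin n) (Fin n) K) :=
  {A | A ∈ MatSS K n ∧ ∀ (i j : ℕ) (hi : i ≤ n) (hj : j ≤ n), 1 ≤ i → 1 ≤ j →
    (A.submatrix (Fin.castLE hi) (Fin.castLE hj)).rank ≤ rnk z i j}

/-- `#{(i,j) : i > j, j < z(i), i < z(j)}` for a permutation of `Fin N`
(the `0`-indexed version of `ℓ_fpf`). -/
def ellFpfFin {N : ℕ} (z : Equiv.Perm (Fin N)) : ℕ :=
  (Finset.univ.filter fun p : Fin N × Fin N => p.2 < p.1 ∧ p.2 < z p.1 ∧ p.1 < z p.2).card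

/-- The Pfaffian of an `N × N` matrix:
`pf(A) = ∑_{z fpf involution of [N]} (-1)^{ℓ_fpf(z)} ∏_{z(i) < i} A_{z(i), i}`.
(The sum is empty, hence `0`, when `N` is odd.) -/
noncomputable def Pfaffian {R : Type*} [CommRing R] {N : ℕ} (A : Matrix (Fin N) (Fin N) R) : R :=
  ∑ z ∈ Finset.univ.filter (fun z : Equiv.Perm (Fin N) => (∀ i, z i ≠ i) ∧ ∀ i, z (z i) = i),
    (-1 : R) ^ ellFpfFin z * ∏ i ∈ Finset.univ.filter (fun i : Fin N => z i < i), A (z i) i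

/-- Index set for the variables `u_{ij}`, `n ≥ i > j ≥ 1`, of the coordinate ring
`R_n = K[Mat^ss_n]`; the variable `⟨(a, b), _⟩` is `u_{a+1, b+1}`. -/
abbrev SSVar (n : ℕ) : Type := {p : Fin n × Fin n // p.2 < p.1}

/-- The generic skew-symmetric matrix `U^ss` over `R_n`. -/
noncomputable def Uss (K : Type*) [CommRing K] (n : ℕ) :
    Matrix (Fin n) (Fin n) (MvPolynomial (SSVar n) K) :=
  Matrix.of fun i j =>
    if h : j < i then MvPolynomial.X ⟨(i, j), h⟩
    else if h' : i < j then -MvPolynomial.X ⟨(j, i), h'⟩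
    else 0

/-- The ideal of polynomials vanishing on a set `X`, where a point `A` is evaluated
via `ev A : σ → K`. -/
noncomputable def vanishingIdeal {K : Type*} [CommRing K] {σ M : Type*}
    (X : Set M) (ev : M → σ → K) : Ideal (MvPolynomial σ K) where
  carrier := {f | ∀ A ∈ X, MvPolynomial.eval (ev A) f = 0}
  zero_mem' := by simp
  add_mem' := by
    intro f g hf hg
    simp only [Set.mem_setOf_eq] at *
    intro A hA
    rw [map_add, hf A hA, hg A hA, add_zero]
  smul_mem' := by
    intro c f hf
    simp only [Set.mem_setOf_eq] at *
    intro A hA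
    rw [smul_eq_mul, map_mul, hf A hA, mul_zero]

/-- `I(X^ss_z) ⊆ R_n`, where `u_{ij}` is evaluated at `A` as `A_{ij}`. -/
noncomputable def IXss (K : Type*) [Field K] (n : ℕ) (z : Equiv.Perm ℕ) :
    Ideal (MvPolynomial (SSVar n) K) :=
  vanishingIdeal (Xss K n z) fun A v => A v.1.1 v.1.2

/-- `pf(U^ss_{RR})` for a finite row/column set `R` (listed in increasing order). -/
noncomputable def pfUss (K : Type*) [CommRing K] {n : ℕ} (R : Finset (Fin n)) :
    MvPolynomial (SSVar n) K :=
  Pfaffian ((Uss K n).submatrix (fun s => R.orderEmbOfFin rfl s) fun t => R.orderEmbOfFin rfl t)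

/-- The ideal `I^ss_z`, generated by the Pfaffians `pf(U^ss_{RR})` over all nonempty
even-size `R ⊆ [n]` such that `R ⊆ [i]` and `|R ∩ [j]| > r_z(i,j)` for some `i ≥ j`. -/
noncomputable def IssIdeal (K : Type*) [Field K] (n : ℕ) (z : Equiv.Perm ℕ) :
    Ideal (MvPolynomial (SSVar n) K) :=
  Ideal.span {f : MvPolynomial (SSVar n) K | ∃ R : Finset (Fin n),
    R.Nonempty ∧ Even R.card ∧
    (∃ i j : ℕ, 1 ≤ j ∧ j ≤ i ∧ i ≤ n ∧ (∀ a ∈ R, (a : ℕ) + 1 ≤ i) ∧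
      rnk z i j < (R.filter fun a : Fin n => (a : ℕ) + 1 ≤ j).card) ∧
    f = pfUss K R}

/-- The square-free monomial `u^ss_{AB}`: zero if `A ⊙ B` meets the diagonal, and otherwise
the product of the variables `u_{ij}` over the pairs `i > j` with `(i,j)` or `(j,i)` in
`A ⊙ B = {(a_0, b_r), (a_1, b_{r-1}), ..., (a_r, b_0)}`. -/
noncomputable def ussMon (K : Type*) [CommRing K] {n : ℕ} (A B : Finset (Fin n)) :
    MvPolynomial (SSVar n) K :=
  if h : A.card = B.card then
    if ∃ t : Fin A.card, (A.orderEmbOfFin rfl t : Fin n) = B.orderEmbOfFin h.symm t.rev then 0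
    else
      ∏ v ∈ Finset.univ.filter (fun v : SSVar n => ∃ t : Fin A.card,
          (A.orderEmbOfFin rfl t = v.1.1 ∧ B.orderEmbOfFin h.symm t.rev = v.1.2) ∨
          (A.orderEmbOfFin rfl t = v.1.2 ∧ B.orderEmbOfFin h.symm t.rev = v.1.1)),
        MvPolynomial.X v
  else 0

/-- The monomial ideal `J^ss_r` of a symmetric rank table `r`, generated by the monomials
`u^ss_{AB}` with `A ⊆ [i]`, `B ⊆ [j]`, `|A| = |B| = r(i,j) + 1` for some `n ≥ i ≥ j ≥ 1`. -/
noncomputable def JssIdealOfTable (K : Type*) [CommRing K] (n : ℕ) (r : ℕ → ℕ → ℕ) :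
    Ideal (MvPolynomial (SSVar n) K) :=
  Ideal.span {g : MvPolynomial (SSVar n) K | ∃ (i j : ℕ) (A B : Finset (Fin n)),
    1 ≤ j ∧ j ≤ i ∧ i ≤ n ∧
    (∀ a ∈ A, (a : ℕ) + 1 ≤ i) ∧ (∀ b ∈ B, (b : ℕ) + 1 ≤ j) ∧
    A.card = r i j + 1 ∧ B.card = r i j + 1 ∧ g = ussMon K A B}

/-- `J^ss_z = J^ss_{r_z}`. -/
noncomputable def JssIdeal (K : Type*) [CommRing K] (n : ℕ) (z : Equiv.Perm ℕ) :
    Ideal (MvPolynomial (SSVar n) K) :=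
  JssIdealOfTable K n (rnk z)

/-- Total degree of a monomial (exponent vector). -/
def totalDeg {σ : Type*} (m : σ →₀ ℕ) : ℕ := m.sum fun _ e => e

/-- The lexicographic order on the variables `u_{ij}` by the pair `(i, j)`. -/
def varLT {n : ℕ} (v w : SSVar n) : Prop :=
  v.1.1 < w.1.1 ∨ (v.1.1 = w.1.1 ∧ v.1.2 < w.1.2)

/-- The (graded) reverse lexicographic term order on monomials of `R_n`:
`m₁ < m₂` iff `deg m₁ < deg m₂`, or the degrees agree and the lexicographically largest
variable with different exponents has strictly larger exponent in `m₁`. -/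
def revlexLT {n : ℕ} (m₁ m₂ : SSVar n →₀ ℕ) : Prop :=
  totalDeg m₁ < totalDeg m₂ ∨
    (totalDeg m₁ = totalDeg m₂ ∧ ∃ v, m₂ v < m₁ v ∧ ∀ w, varLT v w → m₁ w = m₂ w)

/-- The initial ideal of `I` with respect to a strict term order `lt`: the ideal
generated by the leading monomials `init(f)` of the nonzero `f ∈ I`. -/
noncomputable def initIdeal {K : Type*} [CommRing K] {σ : Type*}
    (lt : (σ →₀ ℕ) → (σ →₀ ℕ) → Prop) (I : Ideal (MvPolynomial σ K)) :
    Ideal (MvPolynomial σ K) :=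
  Ideal.span {g : MvPolynomial σ K | ∃ f ∈ I, f ≠ 0 ∧ ∃ m : σ →₀ ℕ, m ∈ f.support ∧
    (∀ m' ∈ f.support, m' ≠ m → lt m' m) ∧ g = MvPolynomial.monomial m (1 : K)}

/-- A term order on the monomials of a polynomial ring: a linear order in which `1` is
the unique minimum and multiplication by a fixed monomial preserves order. -/
structure TermOrder (σ : Type*) where
  le : (σ →₀ ℕ) → (σ →₀ ℕ) → Prop
  trans : ∀ a b c, le a b → le b c → le a c
  antisymm : ∀ a b, le a b → le b a → a = b
  total : ∀ a b, le a b ∨ le b a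
  zero_le : ∀ a, le 0 a
  add_le_add_right : ∀ a b c, le a b → le (a + c) (b + c)

/-- The initial ideal of `I` with respect to a term order `τ`. -/
noncomputable def initIdealLe {K : Type*} [CommRing K] {σ : Type*}
    (τ : TermOrder σ) (I : Ideal (MvPolynomial σ K)) : Ideal (MvPolynomial σ K) :=
  Ideal.span {g : MvPolynomial σ K | ∃ f ∈ I, f ≠ 0 ∧ ∃ m : σ →₀ ℕ, m ∈ f.support ∧
    (∀ m' ∈ f.support, τ.le m' m) ∧ g = MvPolynomial.monomial m (1 : K)}

/-- An ideal is homogeneous (w.r.t. total degree) iff it contains all homogeneous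
components of its elements. -/
def IsHomogIdeal {K : Type*} [CommSemiring K] {σ : Type*}
    (I : Ideal (MvPolynomial σ K)) : Prop :=
  ∀ f ∈ I, ∀ d : ℕ, MvPolynomial.homogeneousComponent d f ∈ I

/-- The reading order on boxes: rows top to bottom, each row right to left. -/
def pdRel (p q : ℕ × ℕ) : Prop := p.1 < q.1 ∨ (p.1 = q.1 ∧ q.2 ≤ p.2)

instance : DecidableRel pdRel := fun p q => by unfold pdRel; infer_instance

instance : IsTrans (ℕ × ℕ) pdRel :=
  ⟨fun a b c hab hbc => by unfold pdRel at *; omega⟩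

instance : IsAntisymm (ℕ × ℕ) pdRel :=
  ⟨fun a b hab hba => by
    unfold pdRel at hab hba
    exact Prod.ext_iff.mpr ⟨by omega, by omega⟩⟩

instance : IsTotal (ℕ × ℕ) pdRel :=
  ⟨fun a b => by unfold pdRel; omega⟩

/-- The pipe dream reading word of a finite set `D` of boxes: the letters `i + j - 1`
over `(i, j) ∈ D`, in the order making `(i, -j)` increase lexicographically. -/
def pdWord (D : Finset (ℕ × ℕ)) : List ℕ :=
  (D.sort pdRel).map fun p => p.1 + p.2 - 1

/-- The product `s_{i_1} s_{i_2} ⋯ s_{i_l}` of simple transpositions. -/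
def wordProd (l : List ℕ) : Equiv.Perm ℕ :=
  (l.map fun i => Equiv.swap i (i + 1)).prod

/-- `l` is a reduced word for `w`: a minimal-length word of positive letters whose
product of simple transpositions is `w`. -/
def IsReducedWordOf (w : Equiv.Perm ℕ) (l : List ℕ) : Prop :=
  (∀ a ∈ l, 1 ≤ a) ∧ wordProd l = w ∧
    ∀ l' : List ℕ, (∀ a ∈ l', 1 ≤ a) → wordProd l' = w → l.length ≤ l'.length

/-- The set `RP(w)` of reduced pipe dreams for `w`. -/
def RP (w : Equiv.Perm ℕ) : Set (Finset (ℕ × ℕ)) :=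
  {D | (∀ p ∈ D, 1 ≤ p.1 ∧ 1 ≤ p.2) ∧ IsReducedWordOf w (pdWord D)}

/-- `I^FPF_m`: involutions in `S_∞` that are fixed-point-free on `[m]` and fix
all `i > m`. -/
def IFPFm (m : ℕ) : Set (Equiv.Perm ℕ) :=
  {y | y 0 = 0 ∧ y * y = 1 ∧ (∀ i, 1 ≤ i → i ≤ m → y i ≠ i) ∧ ∀ i, m < i → y i = i}

/-- `z = FPF_m(y)`: `z` agrees with `y` on `[m]` and swaps `m + 2k - 1, m + 2k`
for all `k ≥ 1`. -/
def IsFPFStdOf (m : ℕ) (y z : Equiv.Perm ℕ) : Prop :=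
  (∀ i, i ≤ m → z i = y i) ∧
    ∀ k : ℕ, z (m + 2 * k + 1) = m + 2 * k + 2 ∧ z (m + 2 * k + 2) = m + 2 * k + 1

/-- The set `FP(z)` of fpf-involution pipe dreams for `z ∈ I^FPF_∞`. -/
def FP (z : Equiv.Perm ℕ) : Set (Finset (ℕ × ℕ)) :=
  {E | ∃ (m : ℕ) (y : Equiv.Perm ℕ) (D : Finset (ℕ × ℕ)), Even m ∧ y ∈ IFPFm m ∧
    IsFPFStdOf m y z ∧ D ∈ RP y ∧ D.image Prod.swap = D ∧
    E = D.filter fun p => p.2 < p.1}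

/-- The minor `det(U_{AB})` of the generic `m × n` matrix `U`, with rows `A` and
columns `B` listed in increasing order. -/
noncomputable def genMinor (K : Type*) [CommRing K] {m n : ℕ}
    (A : Finset (Fin m)) (B : Finset (Fin n)) (h : A.card = B.card) :
    MvPolynomial (Fin m × Fin n) K :=
  (Matrix.of fun s t : Fin A.card =>
    (MvPolynomial.X (A.orderEmbOfFin rfl s, B.orderEmbOfFin h.symm t) :
      MvPolynomial (Fin m × Fin n) K)).det

/-- The antidiagonal monomial `u_{AB} = ∏_{(a,b) ∈ A ⊙ B} u_{ab}`. -/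
noncomputable def genMon (K : Type*) [CommRing K] {m n : ℕ}
    (A : Finset (Fin m)) (B : Finset (Fin n)) (h : A.card = B.card) :
    MvPolynomial (Fin m × Fin n) K :=
  ∏ t : Fin A.card, MvPolynomial.X (A.orderEmbOfFin rfl t, B.orderEmbOfFin h.symm t.rev)

/-- The exponent vector of the antidiagonal monomial `u_{AB}`. -/
noncomputable def antidiagExp {m n : ℕ} (A : Finset (Fin m)) (B : Finset (Fin n))
    (h : A.card = B.card) : (Fin m × Fin n) →₀ ℕ :=
  ∑ t : Fin A.card, Finsupp.single (A.orderEmbOfFin rfl t, B.orderEmbOfFin h.symm t.rev) 1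

/-- The ideal `I_w`, generated by the minors `det(U_{AB})` with `A ⊆ [i]`, `B ⊆ [j]`,
`|A| = |B| = r_w(i,j) + 1` for some `(i,j) ∈ [m] × [n]`. -/
noncomputable def IwIdeal (K : Type*) [Field K] (m n : ℕ) (w : Equiv.Perm ℕ) :
    Ideal (MvPolynomial (Fin m × Fin n) K) :=
  Ideal.span {g : MvPolynomial (Fin m × Fin n) K |
    ∃ (i j : ℕ) (A : Finset (Fin m)) (B : Finset (Fin n)) (h : A.card = B.card),
      1 ≤ i ∧ i ≤ m ∧ 1 ≤ j ∧ j ≤ n ∧ (∀ a ∈ A, (a : ℕ) + 1 ≤ i) ∧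
      (∀ b ∈ B, (b : ℕ) + 1 ≤ j) ∧ A.card = rnk w i j + 1 ∧ g = genMinor K A B h}

/-- The monomial ideal `J_w`, generated by the monomials `u_{AB}` with `A ⊆ [i]`,
`B ⊆ [j]`, `|A| = |B| = r_w(i,j) + 1` for some `(i,j) ∈ [m] × [n]`. -/
noncomputable def JwIdeal (K : Type*) [Field K] (m n : ℕ) (w : Equiv.Perm ℕ) :
    Ideal (MvPolynomial (Fin m × Fin n) K) :=
  Ideal.span {g : MvPolynomial (Fin m × Fin n) K |
    ∃ (i j : ℕ) (A : Finset (Fin m)) (B : Finset (Fin n)) (h : A.card = B.card),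
      1 ≤ i ∧ i ≤ m ∧ 1 ≤ j ∧ j ≤ n ∧ (∀ a ∈ A, (a : ℕ) + 1 ≤ i) ∧
      (∀ b ∈ B, (b : ℕ) + 1 ≤ j) ∧ A.card = rnk w i j + 1 ∧ g = genMon K A B h}

/-- The matrix Schubert variety
`X_w = {A ∈ Mat_{m×n} : rank A_{[i][j]} ≤ r_w(i,j) for all (i,j) ∈ [m] × [n]}`. -/
noncomputable def Xw (K : Type*) [Field K] (m n : ℕ) (w : Equiv.Perm ℕ) :
    Set (Matrix (Fin m) (Fin n) K) :=
  {A | ∀ (i j : ℕ) (hi : i ≤ m) (hj : j ≤ n), 1 ≤ i → 1 ≤ j →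
    (A.submatrix (Fin.castLE hi) (Fin.castLE hj)).rank ≤ rnk w i j}

/-- `I(X_w)`: the ideal of polynomials vanishing on `X_w`. -/
noncomputable def IXw (K : Type*) [Field K] (m n : ℕ) (w : Equiv.Perm ℕ) :
    Ideal (MvPolynomial (Fin m × Fin n) K) :=
  vanishingIdeal (Xw K m n w) fun A v => A v.1 v.2

/-- The variable `u_{pq}` (with `1 ≤ q < p ≤ n`) of `R_n`. -/
def ssvar {n : ℕ} (p q : ℕ) (hp : p ≤ n) (hq : 1 ≤ q) (hqp : q < p) : SSVar n :=
  ⟨(⟨p - 1, by omega⟩, ⟨q - 1, by omega⟩), Fin.mk_lt_mk.mpr (by omega)⟩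

/-- Index set for the variables `u_{ij}`, `i > j ≥ 1`, over all positive integers. -/
abbrev PVar : Type := {p : ℕ × ℕ // 1 ≤ p.2 ∧ p.2 < p.1}

/-- The generic skew-symmetric array `U^ss` over the positive integers:
`u_{xy}` if `x > y`, `-u_{yx}` if `x < y`, `0` if `x = y`. -/
noncomputable def UssP (K : Type*) [CommRing K] (x y : ℕ) : MvPolynomial PVar K :=
  if h : 1 ≤ y ∧ y < x then MvPolynomial.X ⟨(x, y), h⟩
  else if h' : 1 ≤ x ∧ x < y then -MvPolynomial.X ⟨(y, x), h'⟩
  else 0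

/-- `pf(U^ss_{RR})` for a finite set `R` of positive integers. -/
noncomputable def pfUssP (K : Type*) [CommRing K] (R : Finset ℕ) : MvPolynomial PVar K :=
  Pfaffian (Matrix.of fun s t : Fin R.card =>
    UssP K (R.orderEmbOfFin rfl s) (R.orderEmbOfFin rfl t))

/-- `g_{AB}`: the Pfaffian of the `(|B|+|A|) × (|B|+|A|)` skew-symmetric matrix whose
rows and columns are labeled by `B` (increasing) followed by `A` (increasing), with
entry `U^ss_{xy}` at a position labeled `(x, y)`, except that the entry is `0` when
both labels come from the `A`-block. -/
noncomputable def gAB (K : Type*) [CommRing K] (A B : Finset ℕ) : MvPolynomial PVar K :=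
  Pfaffian ((Matrix.of fun p q : Fin B.card ⊕ Fin A.card =>
      match p, q with
      | Sum.inl s, Sum.inl t => UssP K (B.orderEmbOfFin rfl s) (B.orderEmbOfFin rfl t)
      | Sum.inl s, Sum.inr t => UssP K (B.orderEmbOfFin rfl s) (A.orderEmbOfFin rfl t)
      | Sum.inr s, Sum.inl t => UssP K (A.orderEmbOfFin rfl s) (B.orderEmbOfFin rfl t)
      | Sum.inr _, Sum.inr _ => (0 : MvPolynomial PVar K)).submatrix
    finSumFinEquiv.symm finSumFinEquiv.symm)

/-- The exponent of the sign `⟨T, S⟩ = (-1)^{|S||T| + C(|S|,2) + ∑ of the (1-indexed)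
positions in the increasing enumeration of `T` occupied by elements of `S`}`. -/
def setSgnExp (T S : Finset ℕ) : ℕ :=
  S.card * T.card + Nat.choose S.card 2 +
    ∑ t : Fin T.card, if T.orderEmbOfFin rfl t ∈ S then (t : ℕ) + 1 else 0

/-!
Read each variable `u_{ab}` of `M` as the two positions `(a, b)` and `(b, a)`: then `r^ss_M(i, j)`
is the greatest length of a chain of such positions running strictly from north-east to south-west
inside the `i × j` corner. Splicing two maximal chains that cross shows that once adding row `i`
increases the rank at column `j`, it does so at every later column; hence the corner ranks are
those of a partial permutation matrix, symmetric because the set of positions is. Splicing a chain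
of odd length with its own reflection makes it longer, so the diagonal ranks are even and this
matrix has zero diagonal. It is thus the matching of the non-fixed points of an involution `y` of
`[n]`, and `z` is the fixed-point-free standardization of `y`, which pairs the fixed points of `y`
with numbers beyond `n` and so leaves the ranks in `[n] × [n]` unchanged.
-/

/-- `q` lies strictly south-west of `p`, positions being in matrix coordinates `(row, column)`. -/
def SouthWest (p q : ℕ × ℕ) : Prop := p.1 < q.1 ∧ q.2 < p.2

instance : Trans SouthWest SouthWest SouthWest :=
  ⟨fun hpq hqr => ⟨hpq.1.trans hqr.1, hqr.2.trans hpq.2⟩⟩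

/-- `l` lists, from north-east to south-west, positions of `S` on a strict antidiagonal inside the
`i × j` corner. Rows and columns are `0`-indexed here, so the corner is `p.1 < i`, `p.2 < j`. -/
structure IsAntidiagonal (S : Set (ℕ × ℕ)) (i j : ℕ) (l : List (ℕ × ℕ)) : Prop where
  isChain : l.IsChain SouthWest
  subset : ∀ p ∈ l, p ∈ S
  row_lt : ∀ p ∈ l, p.1 < i
  col_lt : ∀ p ∈ l, p.2 < j

namespace IsAntidiagonal

variable {S : Set (ℕ × ℕ)} {i i' j j' k k' : ℕ} {l l' : List (ℕ × ℕ)}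

theorem nil (S : Set (ℕ × ℕ)) (i j : ℕ) : IsAntidiagonal S i j [] :=
  ⟨.nil, by simp, by simp, by simp⟩

theorem mono (h : IsAntidiagonal S i j l) (hi : i ≤ i') (hj : j ≤ j') :
    IsAntidiagonal S i' j' l where
  isChain := h.isChain
  subset := h.subset
  row_lt p hp := (h.row_lt p hp).trans_le hi
  col_lt p hp := (h.col_lt p hp).trans_le hj

theorem swap_reverse (h : IsAntidiagonal S i j l) :
    IsAntidiagonal (Prod.swap ⁻¹' S) j i (l.map Prod.swap).reverse := by
  have swap_mem : ∀ p ∈ (l.map Prod.swap).reverse, p.swap ∈ l := by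
    intro p hp
    obtain ⟨q, hq, rfl⟩ := List.mem_map.1 (List.mem_reverse.1 hp)
    exact hq
  refine ⟨?_, fun p hp => h.subset _ (swap_mem p hp), fun p hp => h.col_lt _ (swap_mem p hp),
    fun p hp => h.row_lt _ (swap_mem p hp)⟩
  rw [List.isChain_reverse, List.isChain_map]
  exact h.isChain.imp fun _ _ hpq => hpq.symm

theorem getElem_southWest (h : IsAntidiagonal S i j l) (hk : k < k') (hk' : k' < l.length) :
    SouthWest l[k] l[k'] :=
  List.pairwise_iff_getElem.1 (List.isChain_iff_pairwise.1 h.isChain) k k' _ hk' hk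

theorem take_of_row_lt (h : IsAntidiagonal S i' j l) (hk : k < l.length) (hi : l[k].1 < i) :
    IsAntidiagonal S i j (l.take (k + 1)) where
  isChain := h.isChain.take _
  subset p hp := h.subset p (List.mem_of_mem_take hp)
  row_lt p hp := by
    obtain ⟨m, hm, rfl⟩ := List.mem_take_iff_getElem.1 hp
    rcases (show m ≤ k by omega).eq_or_lt with rfl | hmk
    · exact hi
    · exact (h.getElem_southWest hmk hk).1.trans hi
  col_lt p hp := h.col_lt p (List.mem_of_mem_take hp)

theorem drop_of_col_lt (h : IsAntidiagonal S i j' l) (hk : k < l.length) (hj : l[k].2 < j) :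
    IsAntidiagonal S i j (l.drop k) where
  isChain := h.isChain.drop _
  subset p hp := h.subset p (List.mem_of_mem_drop hp)
  row_lt p hp := h.row_lt p (List.mem_of_mem_drop hp)
  col_lt p hp := by
    obtain ⟨m, hm, rfl⟩ := List.mem_drop_iff_getElem.1 hp
    rcases m.eq_zero_or_pos with rfl | hm0
    · simpa using hj
    · exact (h.getElem_southWest (k := k) (by omega) (by omega)).2.trans hj

theorem append (h : IsAntidiagonal S i j l) (h' : IsAntidiagonal S i j l')
    (hll' : ∀ p ∈ l.getLast?, ∀ q ∈ l'.head?, SouthWest p q) : IsAntidiagonal S i j (l ++ l') where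
  isChain := List.isChain_append.2 ⟨h.isChain, h'.isChain, hll'⟩
  subset p hp := (List.mem_append.1 hp).elim (h.subset p) (h'.subset p)
  row_lt p hp := (List.mem_append.1 hp).elim (h.row_lt p) (h'.row_lt p)
  col_lt p hp := (List.mem_append.1 hp).elim (h.col_lt p) (h'.col_lt p)

theorem splice (h : IsAntidiagonal S i' j l) (h' : IsAntidiagonal S i j' l')
    (hk : k < l.length) (hk' : k' < l'.length) (hkk' : SouthWest l[k] l'[k']) :
    IsAntidiagonal S i j (l.take (k + 1) ++ l'.drop k') := by
  have row_lt : l[k].1 < i := hkk'.1.trans (h'.row_lt _ (List.getElem_mem hk'))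
  have col_lt : l'[k'].2 < j := hkk'.2.trans (h.col_lt _ (List.getElem_mem hk))
  refine (h.take_of_row_lt hk row_lt).append (h'.drop_of_col_lt hk' col_lt) ?_
  simpa [List.getLast?_take, List.head?_drop, hk, hk'] using hkk'

-- Cut both chains at the first index where `l` is strictly above `l'`; whichever of the two
-- possible splices exists there is the required chain.
theorem exists_of_crossing (h : IsAntidiagonal S i j' l) (h' : IsAntidiagonal S i' j l')
    (hlen : l.length = l'.length) :
    (∃ m, IsAntidiagonal S i j m ∧ m.length = l.length) ∨
      ∃ m, IsAntidiagonal S i' j' m ∧ m.length = l.length + 1 := by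
  classical
  by_cases hrow : ∃ k, ∃ hk : k < l.length, l[k].1 < l'[k].1
  · obtain ⟨hk, hlt⟩ := Nat.find_spec hrow
    have hmin := fun m => Nat.find_min hrow (m := m)
    generalize Nat.find hrow = k at hk hlt hmin
    by_cases hcol : l'[k].2 < l[k].2
    · exact .inr ⟨_, h.splice h' hk (hlen ▸ hk) ⟨hlt, hcol⟩, by grind⟩
    · left
      cases k with
      | zero =>
        have head_lt : l[0].2 < j := (not_lt.1 hcol).trans_lt (h'.col_lt _ (List.getElem_mem _))
        exact ⟨l, h.drop_of_col_lt hk head_lt, rfl⟩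
      | succ k =>
        have hrow_k : l'[k].1 ≤ l[k].1 :=
          not_lt.1 fun hlt => hmin k k.lt_succ_self ⟨by omega, hlt⟩
        have hl := h.getElem_southWest k.lt_succ_self hk
        have hl' := h'.getElem_southWest k.lt_succ_self (hlen ▸ hk)
        have hsw : SouthWest l'[k] l[k + 1] :=
          ⟨hrow_k.trans_lt hl.1, (not_lt.1 hcol).trans_lt hl'.2⟩
        exact ⟨_, h'.splice h (by omega) hk hsw, by grind⟩
  · push Not at hrow
    refine .inl ⟨l', ⟨h'.isChain, h'.subset, fun p hp => ?_, h'.col_lt⟩, hlen.symm⟩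
    obtain ⟨k, hk, rfl⟩ := List.mem_iff_getElem.1 hp
    exact (hrow k (by omega)).trans_lt (h.row_lt _ (List.getElem_mem _))

-- An odd chain is spliced at its middle position with its own reflection in the main diagonal.
theorem exists_succ_of_odd (hS : ∀ p ∈ S, p.swap ∈ S) (hdiag : ∀ x, (x, x) ∉ S)
    (h : IsAntidiagonal S i i l) (hodd : Odd l.length) :
    ∃ m, IsAntidiagonal S i i m ∧ m.length = l.length + 1 := by
  obtain ⟨k, hk⟩ := hodd
  have hrefl : IsAntidiagonal S i i (l.map Prod.swap).reverse :=
    { h.swap_reverse with subset := fun p hp => hS _ (h.swap_reverse.subset p hp) }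
  have hkl : k < l.length := by omega
  have hkl' : k < (l.map Prod.swap).reverse.length := by simpa using hkl
  have hmid : (l.map Prod.swap).reverse[k] = l[k].swap := by
    simp [show l.length - 1 - k = k by omega]
  have hne : l[k].1 ≠ l[k].2 := fun heq =>
    hdiag l[k].1 ((Prod.ext rfl heq : (l[k].1, l[k].1) = l[k]) ▸ h.subset _ (List.getElem_mem _))
  rcases hne.lt_or_gt with hlt | hgt
  · exact ⟨_, h.splice hrefl hkl hkl' (by rw [hmid]; exact ⟨hlt, hlt⟩), by grind⟩
  · exact ⟨_, hrefl.splice h hkl' hkl (by rw [hmid]; exact ⟨hgt, hgt⟩), by grind⟩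

theorem exists_pred (h : IsAntidiagonal S (i + 1) j l) :
    ∃ m, IsAntidiagonal S i j m ∧ l.length ≤ m.length + 1 := by
  by_cases hlen : l.length ≤ 1
  · exact ⟨[], nil S i j, hlen⟩
  · obtain ⟨k, hk⟩ : ∃ k, l.length = k + 2 := ⟨l.length - 2, by omega⟩
    have row_lt : l[k].1 < i := (h.getElem_southWest k.lt_succ_self (by omega)).1.trans_le
      (Nat.le_of_lt_succ (h.row_lt _ (List.getElem_mem _)))
    exact ⟨_, h.take_of_row_lt _ row_lt, by grind⟩

theorem length_le (h : IsAntidiagonal S i j l) : l.length ≤ i := by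
  induction i generalizing l with
  | zero => simp [List.eq_nil_iff_forall_not_mem.2 fun p hp => Nat.not_lt_zero _ (h.row_lt p hp)]
  | succ i ih =>
    obtain ⟨m, hm, hlm⟩ := h.exists_pred
    exact hlm.trans (Nat.succ_le_succ (ih hm))

end IsAntidiagonal

/-- The greatest length of an antidiagonal of `S` inside the `i × j` corner. -/
noncomputable def antidiagonalRank (S : Set (ℕ × ℕ)) (i j : ℕ) : ℕ :=
  sSup (List.length '' {l | IsAntidiagonal S i j l})

section antidiagonalRank

variable {S : Set (ℕ × ℕ)} {i i' j j' : ℕ} {l : List (ℕ × ℕ)}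

theorem isGreatest_antidiagonalRank (S : Set (ℕ × ℕ)) (i j : ℕ) :
    IsGreatest (List.length '' {l | IsAntidiagonal S i j l}) (antidiagonalRank S i j) := by
  have hbdd : BddAbove (List.length '' {l | IsAntidiagonal S i j l}) :=
    ⟨i, by rintro _ ⟨l, hl, rfl⟩; exact hl.length_le⟩
  exact ⟨Nat.sSup_mem ⟨_, [], IsAntidiagonal.nil S i j, rfl⟩ hbdd, fun _ => le_csSup hbdd⟩

theorem IsAntidiagonal.length_le_antidiagonalRank (h : IsAntidiagonal S i j l) :
    l.length ≤ antidiagonalRank S i j :=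
  (isGreatest_antidiagonalRank S i j).2 ⟨l, h, rfl⟩

theorem exists_length_eq_antidiagonalRank (S : Set (ℕ × ℕ)) (i j : ℕ) :
    ∃ l, IsAntidiagonal S i j l ∧ l.length = antidiagonalRank S i j :=
  (isGreatest_antidiagonalRank S i j).1

theorem antidiagonalRank_mono (hi : i ≤ i') (hj : j ≤ j') :
    antidiagonalRank S i j ≤ antidiagonalRank S i' j' := by
  obtain ⟨l, hl, hlen⟩ := exists_length_eq_antidiagonalRank S i j
  exact hlen ▸ (hl.mono hi hj).length_le_antidiagonalRank

theorem antidiagonalRank_zero_left (S : Set (ℕ × ℕ)) (j : ℕ) : antidiagonalRank S 0 j = 0 := by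
  obtain ⟨l, hl, hlen⟩ := exists_length_eq_antidiagonalRank S 0 j
  exact Nat.le_zero.1 (hlen ▸ hl.length_le)

theorem antidiagonalRank_succ_left_le (S : Set (ℕ × ℕ)) (i j : ℕ) :
    antidiagonalRank S (i + 1) j ≤ antidiagonalRank S i j + 1 := by
  obtain ⟨l, hl, hlen⟩ := exists_length_eq_antidiagonalRank S (i + 1) j
  obtain ⟨m, hm, hlm⟩ := hl.exists_pred
  exact hlen ▸ hlm.trans (Nat.succ_le_succ hm.length_le_antidiagonalRank)

theorem antidiagonalRank_le_preimage_swap (S : Set (ℕ × ℕ)) (i j : ℕ) :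
    antidiagonalRank S i j ≤ antidiagonalRank (Prod.swap ⁻¹' S) j i := by
  obtain ⟨l, hl, hlen⟩ := exists_length_eq_antidiagonalRank S i j
  simpa [hlen] using hl.swap_reverse.length_le_antidiagonalRank

theorem antidiagonalRank_preimage_swap (S : Set (ℕ × ℕ)) (i j : ℕ) :
    antidiagonalRank (Prod.swap ⁻¹' S) j i = antidiagonalRank S i j :=
  (antidiagonalRank_le_preimage_swap _ j i).antisymm (antidiagonalRank_le_preimage_swap S i j)

theorem antidiagonalRank_succ_right_le (S : Set (ℕ × ℕ)) (i j : ℕ) :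
    antidiagonalRank S i (j + 1) ≤ antidiagonalRank S i j + 1 := by
  simpa only [antidiagonalRank_preimage_swap] using
    antidiagonalRank_succ_left_le (Prod.swap ⁻¹' S) j i

theorem antidiagonalRank_comm (hS : ∀ p ∈ S, p.swap ∈ S) (i j : ℕ) :
    antidiagonalRank S i j = antidiagonalRank S j i := by
  have hswap : Prod.swap ⁻¹' S = S := Set.ext fun p => ⟨hS p.swap, hS p⟩
  rw [← antidiagonalRank_preimage_swap, hswap]

theorem antidiagonalRank_succ_succ
    (h : antidiagonalRank S (i + 1) j = antidiagonalRank S i j + 1) :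
    antidiagonalRank S (i + 1) (j + 1) = antidiagonalRank S i (j + 1) + 1 := by
  refine (antidiagonalRank_succ_left_le S i (j + 1)).antisymm ?_
  have hup : antidiagonalRank S (i + 1) j ≤ antidiagonalRank S (i + 1) (j + 1) :=
    antidiagonalRank_mono le_rfl j.le_succ
  rcases (antidiagonalRank_succ_right_le S i j).lt_or_eq with hlt | heq
  · omega
  · obtain ⟨l, hl, hlen⟩ := exists_length_eq_antidiagonalRank S i (j + 1)
    obtain ⟨l', hl', hlen'⟩ := exists_length_eq_antidiagonalRank S (i + 1) j
    rcases hl.exists_of_crossing hl' (by omega) with ⟨m, hm, hmlen⟩ | ⟨m, hm, hmlen⟩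
    · have := hm.length_le_antidiagonalRank
      omega
    · exact hlen ▸ hmlen ▸ hm.length_le_antidiagonalRank

theorem even_antidiagonalRank_self (hS : ∀ p ∈ S, p.swap ∈ S) (hdiag : ∀ x, (x, x) ∉ S) (i : ℕ) :
    Even (antidiagonalRank S i i) := by
  obtain ⟨l, hl, hlen⟩ := exists_length_eq_antidiagonalRank S i i
  by_contra hodd
  obtain ⟨m, hm, hmlen⟩ :=
    hl.exists_succ_of_odd hS hdiag (hlen ▸ Nat.not_even_iff_odd.1 hodd)
  have := hm.length_le_antidiagonalRank
  omega

end antidiagonalRank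

section SwapProduct

variable {α : Type*} [DecidableEq α] {k : ℕ} {f g : Fin k → α}

theorem prod_ofFn_swap_apply_of_ne {x : α} (hf : ∀ t, x ≠ f t) (hg : ∀ t, x ≠ g t) :
    (List.ofFn fun t => Equiv.swap (f t) (g t)).prod x = x := by
  induction k with
  | zero => simp
  | succ k ih =>
    rw [List.ofFn_succ, List.prod_cons, Equiv.Perm.mul_apply,
      ih (fun t => hf t.succ) (fun t => hg t.succ), Equiv.swap_apply_of_ne_of_ne (hf 0) (hg 0)]

theorem prod_ofFn_swap_apply_left (hf : f.Injective) (hg : g.Injective) (hfg : ∀ s t, f s ≠ g t)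
    (t : Fin k) : (List.ofFn fun t => Equiv.swap (f t) (g t)).prod (f t) = g t := by
  induction k with
  | zero => exact t.elim0
  | succ k ih =>
    rw [List.ofFn_succ, List.prod_cons, Equiv.Perm.mul_apply]
    cases t using Fin.cases with
    | zero =>
      rw [prod_ofFn_swap_apply_of_ne (fun t => hf.ne (Fin.succ_ne_zero t).symm)
        (fun t => hfg 0 t.succ), Equiv.swap_apply_left]
    | succ t =>
      rw [ih (f := fun t => f t.succ) (g := fun t => g t.succ)
        (hf.comp (Fin.succ_injective k)) (hg.comp (Fin.succ_injective k))
        (fun s t => hfg s.succ t.succ) t,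
        Equiv.swap_apply_of_ne_of_ne (hfg 0 t.succ).symm (hg.ne (Fin.succ_ne_zero t))]

theorem prod_ofFn_swap_apply_right (hf : f.Injective) (hg : g.Injective) (hfg : ∀ s t, f s ≠ g t)
    (t : Fin k) : (List.ofFn fun t => Equiv.swap (f t) (g t)).prod (g t) = f t := by
  simpa only [Equiv.swap_comm] using
    prod_ofFn_swap_apply_left hg hf (fun s t => (hfg t s).symm) t

end SwapProduct

theorem even_card_of_involution {α : Type*} {s : Finset α} {f : α → α}
    (hmem : ∀ x ∈ s, f x ∈ s) (hinv : ∀ x ∈ s, f (f x) = x) (hne : ∀ x ∈ s, f x ≠ x) :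
    Even s.card := by
  have hsum : ∑ _x ∈ s, (1 : ZMod 2) = 0 :=
    Finset.sum_involution (fun x _ => f x) (fun _ _ => CharTwo.add_self_eq_zero 1)
      (fun x hx _ => hne x hx) hmem hinv
  rwa [Finset.sum_const, nsmul_one, ZMod.natCast_eq_zero_iff_even] at hsum

section FPFStandardization

variable {n i j x : ℕ} {y : Equiv.Perm ℕ}

theorem mem_fixedPtsIn : x ∈ fixedPtsIn n y ↔ (1 ≤ x ∧ x ≤ n) ∧ y x = x := by
  rw [fixedPtsIn, Finset.mem_filter, Finset.mem_Icc]

theorem apply_apply_of_mem_InvolIn (hy : y ∈ InvolIn n) (x : ℕ) : y (y x) = x :=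
  DFunLike.congr_fun hy.2.1 x

theorem apply_le_of_mem_InvolIn (hy : y ∈ InvolIn n) (hx : x ≤ n) : y x ≤ n := by
  by_contra! hlt
  have hfix : y (y x) = y x := hy.2.2 _ hlt
  rw [apply_apply_of_mem_InvolIn hy] at hfix
  omega

theorem one_le_apply_of_mem_InvolIn (hy : y ∈ InvolIn n) (hx : 1 ≤ x) : 1 ≤ y x := by
  rw [Nat.one_le_iff_ne_zero] at hx ⊢
  exact fun h0 => hx (y.injective (h0.trans hy.1.symm))

theorem even_add_card_fixedPtsIn (hy : y ∈ InvolIn n) : Even (n + (fixedPtsIn n y).card) := by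
  have hmoved : Even ((Finset.Icc 1 n).filter fun i => ¬ y i = i).card := by
    refine even_card_of_involution (f := y) (fun x hx => ?_)
      (fun x _ => apply_apply_of_mem_InvolIn hy x) (fun x hx => (Finset.mem_filter.1 hx).2)
    simp only [Finset.mem_filter, Finset.mem_Icc] at hx ⊢
    exact ⟨⟨one_le_apply_of_mem_InvolIn hy hx.1.1, apply_le_of_mem_InvolIn hy hx.1.2⟩,
      fun hfix => hx.2 (y.injective hfix)⟩
  have hsplit := Finset.card_filter_add_card_filter_not (s := Finset.Icc 1 n) (fun i => y i = i)
  rw [Nat.card_Icc, Nat.add_sub_cancel] at hsplit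
  rw [fixedPtsIn]
  grind

theorem orderEmbOfFin_fixedPtsIn_spec (t : Fin (fixedPtsIn n y).card) :
    (1 ≤ (fixedPtsIn n y).orderEmbOfFin rfl t ∧ (fixedPtsIn n y).orderEmbOfFin rfl t ≤ n) ∧
      y ((fixedPtsIn n y).orderEmbOfFin rfl t) = (fixedPtsIn n y).orderEmbOfFin rfl t :=
  mem_fixedPtsIn.1 (Finset.orderEmbOfFin_mem _ _ _)

theorem tailSwap_apply_of_le {m : ℕ} (hx : x ≤ m) : tailSwap m x = x := if_pos hx

theorem tailSwap_apply_of_lt {m : ℕ} (hm : Even m) (hx : m < x) : tailSwap m x = oneFPF x := by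
  obtain ⟨k, rfl⟩ := hm
  change tailSwapFun (k + k) x = oneFPF x
  unfold tailSwapFun oneFPF
  split_ifs <;> omega

theorem fpfStd_apply_orderEmbOfFin (hy : y ∈ InvolIn n) (t : Fin (fixedPtsIn n y).card) :
    fpfStd n y ((fixedPtsIn n y).orderEmbOfFin rfl t) = n + t + 1 := by
  have hle := fun s : Fin (fixedPtsIn n y).card => (orderEmbOfFin_fixedPtsIn_spec s).1.2
  rw [fpfStd, Equiv.Perm.mul_apply, Equiv.Perm.mul_apply,
    tailSwap_apply_of_le ((hle t).trans (Nat.le_add_right _ _)),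
    prod_ofFn_swap_apply_left (f := (fixedPtsIn n y).orderEmbOfFin rfl) (RelEmbedding.injective _)
      (fun s t h => Fin.ext (by omega)) (fun s t => by have := hle s; omega)]
  exact hy.2.2 _ (by omega)

theorem fpfStd_apply_add_add_one (t : Fin (fixedPtsIn n y).card) :
    fpfStd n y (n + t + 1) = (fixedPtsIn n y).orderEmbOfFin rfl t := by
  have hle := fun s : Fin (fixedPtsIn n y).card => (orderEmbOfFin_fixedPtsIn_spec s).1.2
  rw [fpfStd, Equiv.Perm.mul_apply, Equiv.Perm.mul_apply, tailSwap_apply_of_le (by omega),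
    prod_ofFn_swap_apply_right (g := fun t : Fin (fixedPtsIn n y).card => n + (t : ℕ) + 1)
      (RelEmbedding.injective _) (fun s t h => Fin.ext (by dsimp only at h; omega))
      (fun s t => by have := hle s; omega)]
  exact (orderEmbOfFin_fixedPtsIn_spec t).2

theorem fpfStd_apply_of_notMem (hx : x ≤ n) (hxf : x ∉ fixedPtsIn n y) :
    fpfStd n y x = y x := by
  have hne (t) : x ≠ (fixedPtsIn n y).orderEmbOfFin rfl t := fun h =>
    hxf (h ▸ Finset.orderEmbOfFin_mem _ _ t)
  rw [fpfStd, Equiv.Perm.mul_apply, Equiv.Perm.mul_apply, tailSwap_apply_of_le (by omega),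
    prod_ofFn_swap_apply_of_ne hne (fun t => by omega)]

theorem fpfStd_apply_of_lt (hy : y ∈ InvolIn n) (hx : n + (fixedPtsIn n y).card < x) :
    fpfStd n y x = oneFPF x := by
  have hlt : n + (fixedPtsIn n y).card < oneFPF x := by
    have := Nat.even_iff.1 (even_add_card_fixedPtsIn hy)
    unfold oneFPF
    split_ifs <;> omega
  rw [fpfStd, Equiv.Perm.mul_apply, Equiv.Perm.mul_apply,
    tailSwap_apply_of_lt (even_add_card_fixedPtsIn hy) hx,
    prod_ofFn_swap_apply_of_ne (fun t => ?_) (fun t => by omega)]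
  · exact hy.2.2 _ (by omega)
  · have := (orderEmbOfFin_fixedPtsIn_spec t).1.2
    omega

theorem fpfStd_cases (n : ℕ) (y : Equiv.Perm ℕ) (x : ℕ) :
    (x ≤ n ∧ x ∉ fixedPtsIn n y) ∨ (∃ t, x = (fixedPtsIn n y).orderEmbOfFin rfl t) ∨
      (∃ t : Fin (fixedPtsIn n y).card, x = n + t + 1) ∨ n + (fixedPtsIn n y).card < x := by
  by_cases hxf : x ∈ fixedPtsIn n y
  · rw [← Finset.mem_coe, ← Finset.range_orderEmbOfFin _ rfl] at hxf
    exact .inr (.inl (hxf.imp fun _ => Eq.symm))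
  · rcases le_or_gt x n with hxn | hxn
    · exact .inl ⟨hxn, hxf⟩
    · rcases le_or_gt x (n + (fixedPtsIn n y).card) with hxk | hxk
      · exact .inr (.inr (.inl ⟨⟨x - n - 1, by omega⟩, by simp only; omega⟩))
      · exact .inr (.inr (.inr hxk))

theorem fpfStd_involutive (hy : y ∈ InvolIn n) : Function.Involutive (fpfStd n y) := by
  intro x
  rcases fpfStd_cases n y x with ⟨hxn, hxf⟩ | ⟨t, rfl⟩ | ⟨t, rfl⟩ | hx
  · have hyxf : y x ∉ fixedPtsIn n y := fun hmem =>
      hxf (y.injective (mem_fixedPtsIn.1 hmem).2 ▸ hmem)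
    rw [fpfStd_apply_of_notMem hxn hxf,
      fpfStd_apply_of_notMem (apply_le_of_mem_InvolIn hy hxn) hyxf, apply_apply_of_mem_InvolIn hy]
  · rw [fpfStd_apply_orderEmbOfFin hy, fpfStd_apply_add_add_one]
  · rw [fpfStd_apply_add_add_one, fpfStd_apply_orderEmbOfFin hy]
  · have := Nat.even_iff.1 (even_add_card_fixedPtsIn hy)
    rw [fpfStd_apply_of_lt hy hx, fpfStd_apply_of_lt hy] <;> unfold oneFPF <;> split_ifs <;> omega

theorem fpfStd_apply_ne (hy : y ∈ InvolIn n) (hx : 1 ≤ x) : fpfStd n y x ≠ x := by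
  rcases fpfStd_cases n y x with ⟨hxn, hxf⟩ | ⟨t, rfl⟩ | ⟨t, rfl⟩ | hlt
  · rw [fpfStd_apply_of_notMem hxn hxf]
    exact fun hfix => hxf (mem_fixedPtsIn.2 ⟨⟨hx, hxn⟩, hfix⟩)
  · have := (orderEmbOfFin_fixedPtsIn_spec t).1.2
    rw [fpfStd_apply_orderEmbOfFin hy]
    omega
  · have := (orderEmbOfFin_fixedPtsIn_spec t).1.2
    rw [fpfStd_apply_add_add_one]
    omega
  · rw [fpfStd_apply_of_lt hy hlt, oneFPF]
    split_ifs <;> omega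

theorem fpfStd_mem_IFPFInfty (hy : y ∈ InvolIn n) : fpfStd n y ∈ IFPFInfty := by
  refine ⟨?_, fun i hi => fpfStd_apply_ne hy hi, Equiv.ext fun x => ?_,
    n + (fixedPtsIn n y).card + 1, fun i hi => fpfStd_apply_of_lt hy (by omega)⟩
  · rw [fpfStd_apply_of_notMem n.zero_le (by simp [mem_fixedPtsIn]), hy.1]
  · rw [Equiv.Perm.mul_apply, fpfStd_involutive hy, Equiv.Perm.one_apply]

theorem exists_orderEmbOfFin_eq_of_lt_fpfStd (hy : y ∈ InvolIn n) (hni : n < i) (hji : j < i)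
    (hij : i < fpfStd n y j) : ∃ t, j = (fixedPtsIn n y).orderEmbOfFin rfl t := by
  rcases fpfStd_cases n y j with ⟨hjn, hjf⟩ | hex | ⟨s, rfl⟩ | hlt
  · have := apply_le_of_mem_InvolIn hy hjn
    rw [fpfStd_apply_of_notMem hjn hjf] at hij
    omega
  · exact hex
  · have := (orderEmbOfFin_fixedPtsIn_spec s).1.2
    rw [fpfStd_apply_add_add_one] at hij
    omega
  · rw [fpfStd_apply_of_lt hy hlt, oneFPF] at hij
    split_ifs at hij <;> omega

-- The added cycles `(i_t, n + t)` do not nest, so they create no position of `D^ss` below row `n`.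
theorem Dss_fpfStd_subset (hy : y ∈ InvolIn n) :
    Dss (fpfStd n y) ⊆ Set.Icc 1 n ×ˢ Set.Icc 1 n := by
  rintro ⟨i, j⟩ ⟨hj, hji', hji, hij⟩
  dsimp only at hj hji' hji hij
  suffices hin : i ≤ n from ⟨⟨by omega, hin⟩, ⟨hj, by omega⟩⟩
  by_contra! hni
  obtain ⟨s, rfl⟩ := exists_orderEmbOfFin_eq_of_lt_fpfStd hy hni hji hij
  rw [fpfStd_apply_orderEmbOfFin hy] at hij
  obtain ⟨t, rfl⟩ : ∃ t : Fin (fixedPtsIn n y).card, i = n + t + 1 :=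
    ⟨⟨i - n - 1, by omega⟩, by simp only; omega⟩
  rw [fpfStd_apply_add_add_one] at hji'
  have hst : s < t := (OrderEmbedding.lt_iff_lt _).1 hji'
  omega

theorem fpfStd_mem_FPFIn (hy : y ∈ InvolIn n) : fpfStd n y ∈ FPFIn n :=
  ⟨fpfStd_mem_IFPFInfty hy, Dss_fpfStd_subset hy⟩

theorem fpfStd_apply_mem_Icc_iff (hy : y ∈ InvolIn n) (hx : 1 ≤ x) (hxn : x ≤ n) (hjn : j ≤ n) :
    fpfStd n y x ∈ Finset.Icc 1 j ↔ y x ≠ x ∧ y x ≤ j := by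
  rw [Finset.mem_Icc]
  rcases fpfStd_cases n y x with ⟨-, hxf⟩ | ⟨t, rfl⟩ | ⟨t, rfl⟩ | hlt
  · have hne : y x ≠ x := fun hfix => hxf (mem_fixedPtsIn.2 ⟨⟨hx, hxn⟩, hfix⟩)
    rw [fpfStd_apply_of_notMem hxn hxf]
    exact and_congr_left' (iff_of_true (one_le_apply_of_mem_InvolIn hy hx) hne)
  · have hfix := (orderEmbOfFin_fixedPtsIn_spec t).2
    rw [fpfStd_apply_orderEmbOfFin hy]
    exact iff_of_false (by omega) (fun h => h.1 hfix)
  all_goals omega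

end FPFStandardization

section Partner

variable {α : Type*} {R : α → α → Prop} {x : α}

open Classical in
/-- The element matched with `x` by a partial matching `R`, or `x` itself when `x` is unmatched. -/
noncomputable def partner (R : α → α → Prop) (x : α) : α :=
  if h : ∃ y, R x y then h.choose else x

theorem rel_partner (h : ∃ y, R x y) : R x (partner R x) := by
  rw [partner, dif_pos h]
  exact h.choose_spec

theorem partner_of_not_exists (h : ¬ ∃ y, R x y) : partner R x = x := dif_neg h

theorem exists_rel_of_partner_ne (h : partner R x ≠ x) : ∃ y, R x y :=
  not_imp_comm.1 partner_of_not_exists h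

theorem partner_involutive (hsymm : ∀ x y, R x y → R y x)
    (huniq : ∀ x y z, R x y → R x z → y = z) : Function.Involutive (partner R) := by
  intro x
  by_cases h : ∃ y, R x y
  · have hback : R (partner R x) x := hsymm _ _ (rel_partner h)
    exact huniq _ _ _ (rel_partner ⟨x, hback⟩) hback
  · rw [partner_of_not_exists h, partner_of_not_exists h]

end Partner

/-- The combinatorial properties that make `r` the upper left corner ranks of a symmetric partial
permutation matrix with zero diagonal. -/
structure IsFPFRankTable (r : ℕ → ℕ → ℕ) : Prop where
  zero_left : ∀ j, r 0 j = 0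
  symm : ∀ i j, r i j = r j i
  le_succ_left : ∀ i j, r i j ≤ r (i + 1) j
  succ_left_le : ∀ i j, r (i + 1) j ≤ r i j + 1
  succ_succ : ∀ i j, r (i + 1) j = r i j + 1 → r (i + 1) (j + 1) = r i (j + 1) + 1
  even_diag : ∀ i, Even (r i i)

theorem isFPFRankTable_antidiagonalRank {S : Set (ℕ × ℕ)} (hS : ∀ p ∈ S, p.swap ∈ S)
    (hdiag : ∀ x, (x, x) ∉ S) : IsFPFRankTable (antidiagonalRank S) where
  zero_left := antidiagonalRank_zero_left S
  symm := antidiagonalRank_comm hS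
  le_succ_left i _ := antidiagonalRank_mono i.le_succ le_rfl
  succ_left_le := antidiagonalRank_succ_left_le S
  succ_succ _ _ := antidiagonalRank_succ_succ
  even_diag := even_antidiagonalRank_self hS hdiag

/-- `(i, j)` carries a `1` of the partial permutation matrix with corner ranks `r`: the mixed
second difference of `r` there is `1`. Positions are `1`-indexed; the bounds `1 ≤ i`, `1 ≤ j` keep
the subtractions from truncating. -/
def IsJump (r : ℕ → ℕ → ℕ) (i j : ℕ) : Prop :=
  1 ≤ i ∧ 1 ≤ j ∧ r i j + r (i - 1) (j - 1) = r (i - 1) j + r i (j - 1) + 1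

namespace IsFPFRankTable

variable {r : ℕ → ℕ → ℕ} {i j j' n x : ℕ}

theorem succ_left_eq_iff (h : IsFPFRankTable r) (i j : ℕ) :
    r (i + 1) j = r i j + 1 ↔ ∃ b ≤ j, IsJump r (i + 1) b := by
  induction j with
  | zero =>
    rw [h.symm _ 0, h.symm _ 0, h.zero_left, h.zero_left]
    exact iff_of_false (by omega) fun ⟨b, hb, hjump⟩ => by have := hjump.2.1; omega
  | succ j ih =>
    have hjump : IsJump r (i + 1) (j + 1) ↔
        r (i + 1) (j + 1) + r i j = r i (j + 1) + r (i + 1) j + 1 := by simp [IsJump]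
    have hsplit : (∃ b ≤ j + 1, IsJump r (i + 1) b) ↔
        r (i + 1) j = r i j + 1 ∨ IsJump r (i + 1) (j + 1) := by
      simp only [Nat.le_succ_iff, or_and_right, exists_or, exists_eq_left, ih]
    have hprop := h.succ_succ i j
    have hle := h.le_succ_left i j
    have hge := h.succ_left_le i j
    have hge' := h.succ_left_le i (j + 1)
    rw [hsplit, hjump]
    omega

theorem isJump_symm (h : IsFPFRankTable r) (hij : IsJump r i j) : IsJump r j i := by
  obtain ⟨hi, hj, heq⟩ := hij
  refine ⟨hj, hi, ?_⟩
  rw [h.symm j i, h.symm (j - 1) (i - 1), h.symm (j - 1) i, h.symm j (i - 1), heq]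
  omega

theorem not_isJump_of_lt (h : IsFPFRankTable r) (hij : IsJump r i j) (hlt : j < j') :
    ¬ IsJump r i j' := by
  rintro ⟨hi, hj', heq⟩
  obtain ⟨i, rfl⟩ := Nat.exists_eq_add_of_le' hi
  obtain ⟨j', rfl⟩ := Nat.exists_eq_add_of_le' hj'
  have hbefore : r (i + 1) j' = r i j' + 1 :=
    (h.succ_left_eq_iff i j').2 ⟨j, Nat.le_of_lt_succ hlt, hij⟩
  have hge := h.succ_left_le i (j' + 1)
  simp only [Nat.add_sub_cancel] at heq
  omega

theorem isJump_right_unique (h : IsFPFRankTable r) (hij : IsJump r i j) (hij' : IsJump r i j') :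
    j = j' := by
  rcases lt_trichotomy j j' with hlt | heq | hgt
  · exact absurd hij' (h.not_isJump_of_lt hij hlt)
  · exact heq
  · exact absurd hij (h.not_isJump_of_lt hij' hgt)

theorem not_isJump_self (h : IsFPFRankTable r) (i : ℕ) : ¬ IsJump r i i := by
  rintro ⟨-, -, heq⟩
  have heven := h.even_diag i
  have heven' := h.even_diag (i - 1)
  rw [h.symm (i - 1) i] at heq
  grind

open Classical in
theorem eq_card_filter_isJump (h : IsFPFRankTable r) (i j : ℕ) :
    r i j = ((Finset.Icc 1 i).filter fun a => ∃ b ≤ j, IsJump r a b).card := by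
  induction i with
  | zero => simp [h.zero_left]
  | succ i ih =>
    have hstep : r (i + 1) j = r i j + if ∃ b ≤ j, IsJump r (i + 1) b then 1 else 0 := by
      have hle := h.le_succ_left i j
      have hge := h.succ_left_le i j
      have hiff := h.succ_left_eq_iff i j
      split_ifs <;> grind
    rw [hstep, ih, Finset.card_filter, Finset.card_filter, Finset.sum_Icc_succ_top (by omega)]

/-- The partial matching of `[n]` formed by the jumps of `r` in `[n] × [n]`. -/
def JumpMatching (r : ℕ → ℕ → ℕ) (n a b : ℕ) : Prop := IsJump r a b ∧ a ≤ n ∧ b ≤ n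

/-- The involution of `ℕ` exchanging `a` and `b` for every jump `(a, b)` of `r` in `[n] × [n]`. -/
noncomputable def jumpInvolution (h : IsFPFRankTable r) (n : ℕ) : Equiv.Perm ℕ :=
  (partner_involutive (R := JumpMatching r n)
    (fun _ _ hab => ⟨h.isJump_symm hab.1, hab.2.symm⟩)
    (fun _ _ _ hab hac => h.isJump_right_unique hab.1 hac.1)).toPerm

theorem jumpInvolution_apply (h : IsFPFRankTable r) (n x : ℕ) :
    h.jumpInvolution n x = partner (JumpMatching r n) x := rfl

theorem jumpInvolution_mem_InvolIn (h : IsFPFRankTable r) (n : ℕ) :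
    h.jumpInvolution n ∈ InvolIn n := by
  refine ⟨?_, Equiv.ext (Function.Involutive.toPerm_involutive _), fun i hi => ?_⟩ <;>
    rw [jumpInvolution_apply]
  · exact partner_of_not_exists fun ⟨_, hjump, _⟩ => Nat.not_succ_le_zero 0 hjump.1
  · exact partner_of_not_exists fun ⟨_, _, hin, _⟩ => hi.not_ge hin

theorem jumpInvolution_ne_and_le_iff (h : IsFPFRankTable r) (hx : x ≤ n) (hj : j ≤ n) :
    h.jumpInvolution n x ≠ x ∧ h.jumpInvolution n x ≤ j ↔ ∃ b ≤ j, IsJump r x b := by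
  rw [jumpInvolution_apply]
  constructor
  · rintro ⟨hne, hle⟩
    exact ⟨_, hle, (rel_partner (exists_rel_of_partner_ne hne)).1⟩
  · rintro ⟨b, hb, hjump⟩
    have hmatched : ∃ y, JumpMatching r n x y := ⟨b, hjump, hx, hb.trans hj⟩
    rw [h.isJump_right_unique (rel_partner hmatched).1 hjump]
    exact ⟨fun hfix => h.not_isJump_self x (hfix ▸ hjump), hb⟩

theorem exists_mem_FPFIn_rnk_eq (h : IsFPFRankTable r) (n : ℕ) :
    ∃ z ∈ FPFIn n, ∀ i ≤ n, ∀ j ≤ n, rnk z i j = r i j := by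
  classical
  have hy := h.jumpInvolution_mem_InvolIn n
  refine ⟨fpfStd n (h.jumpInvolution n), fpfStd_mem_FPFIn hy, fun i hi j hj => ?_⟩
  rw [h.eq_card_filter_isJump, rnk]
  refine congrArg Finset.card (Finset.filter_congr fun a ha => ?_)
  obtain ⟨ha1, hai⟩ := Finset.mem_Icc.1 ha
  rw [fpfStd_apply_mem_Icc_iff hy ha1 (hai.trans hi) hj,
    h.jumpInvolution_ne_and_le_iff (hai.trans hi) hj]

end IsFPFRankTable

theorem prod_X_dvd_monomial_iff {σ R : Type*} [CommSemiring R] {F : Finset σ} {d : σ →₀ ℕ}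
    {c : R} : ∏ v ∈ F, MvPolynomial.X v ∣ MvPolynomial.monomial d c ↔ c = 0 ∨ F ⊆ d.support := by
  constructor
  · refine fun hdvd => or_iff_not_imp_left.2 fun hc v hv => Finsupp.mem_support_iff.2 ?_
    exact (MvPolynomial.X_dvd_monomial.1
      ((Finset.dvd_prod_of_mem MvPolynomial.X hv).trans hdvd)).resolve_left hc
  · rintro (rfl | hF)
    · simp
    · classical
      have hprod : ∏ v ∈ F, (MvPolynomial.X v : MvPolynomial σ R) =
          MvPolynomial.monomial (∑ v ∈ F, Finsupp.single v 1) 1 :=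
        (MvPolynomial.monomial_sum_one F _).symm
      rw [hprod, MvPolynomial.monomial_dvd_monomial]
      refine ⟨.inr fun v => ?_, one_dvd c⟩
      rw [Finsupp.finsetSum_apply]
      simp only [Finsupp.single_apply, Finset.sum_ite_eq']
      split_ifs with hv
      · exact Nat.one_le_iff_ne_zero.2 (Finsupp.mem_support_iff.1 (hF hv))
      · exact Nat.zero_le _

section SymmSupport

variable {n : ℕ}

/-- The positions, on both sides of the main diagonal and `0`-indexed, of the variables occurring
in the monomial with exponents `d`. -/
def symmSupport (d : SSVar n →₀ ℕ) : Set (ℕ × ℕ) :=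
  {p | ∃ v ∈ d.support, p = (↑v.1.1, ↑v.1.2) ∨ p = (↑v.1.2, ↑v.1.1)}

variable {d : SSVar n →₀ ℕ}

theorem swap_mem_symmSupport {p : ℕ × ℕ} (hp : p ∈ symmSupport d) : p.swap ∈ symmSupport d := by
  obtain ⟨v, hv, rfl | rfl⟩ := hp
  · exact ⟨v, hv, .inr rfl⟩
  · exact ⟨v, hv, .inl rfl⟩

theorem diag_notMem_symmSupport (x : ℕ) : (x, x) ∉ symmSupport d := by
  rintro ⟨v, -, hx⟩
  have : (v.1.2 : ℕ) < v.1.1 := v.2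
  simp only [Prod.mk.injEq] at hx
  omega

theorem mem_symmSupport_iff {x y : Fin n} : ((x : ℕ), (y : ℕ)) ∈ symmSupport d ↔
    x ≠ y ∧ ∀ v : SSVar n, x = v.1.1 ∧ y = v.1.2 ∨ x = v.1.2 ∧ y = v.1.1 → v ∈ d.support := by
  constructor
  · intro hxy
    refine ⟨fun heq => diag_notMem_symmSupport (d := d) x (heq ▸ hxy), fun v hv => ?_⟩
    obtain ⟨w, hw, hxyw⟩ := hxy
    simp only [Prod.mk.injEq, Fin.val_inj] at hxyw
    have hvw : w = v := by grind [v.2, w.2]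
    exact hvw ▸ hw
  · rintro ⟨hne, hxy⟩
    rcases hne.lt_or_gt with hlt | hgt
    · exact ⟨⟨(y, x), hlt⟩, hxy _ (.inr ⟨rfl, rfl⟩), .inr rfl⟩
    · exact ⟨⟨(x, y), hgt⟩, hxy _ (.inl ⟨rfl, rfl⟩), .inl rfl⟩

variable {K : Type*} [CommRing K] {c : K} {A B : Finset (Fin n)} {k : ℕ}

theorem ussMon_dvd_monomial_iff (hc : c ≠ 0) (hA : A.card = k) (hB : B.card = k) :
    ussMon K A B ∣ MvPolynomial.monomial d c ↔
      ∀ t, ((A.orderEmbOfFin hA t : ℕ), (B.orderEmbOfFin hB t.rev : ℕ)) ∈ symmSupport d := by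
  subst hA
  rw [ussMon, dif_pos hB.symm]
  split_ifs with hmeet
  · obtain ⟨t, ht⟩ := hmeet
    rw [zero_dvd_iff, MvPolynomial.monomial_eq_zero]
    exact iff_of_false hc fun hall => (mem_symmSupport_iff.1 (hall t)).1 ht
  · rw [prod_X_dvd_monomial_iff, or_iff_right hc]
    simp only [mem_symmSupport_iff, Finset.subset_iff, Finset.mem_filter, Finset.mem_univ, true_and]
    exact ⟨fun hsub t => ⟨fun ht => hmeet ⟨t, ht⟩, fun v hv => hsub ⟨t, hv⟩⟩,
      fun hall v ⟨t, hv⟩ => (hall t).2 v hv⟩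

theorem ussMon_image_dvd_monomial_iff (hc : c ≠ 0) {f g : Fin k → Fin n} (hf : StrictMono f)
    (hg : StrictMono g) :
    ussMon K (Finset.univ.image f) (Finset.univ.image g) ∣ MvPolynomial.monomial d c ↔
      ∀ t, ((f t : ℕ), (g t.rev : ℕ)) ∈ symmSupport d := by
  have card_image {f : Fin k → Fin n} (hf : StrictMono f) : (Finset.univ.image f).card = k := by
    rw [Finset.card_image_of_injective _ hf.injective, Finset.card_fin]
  rw [ussMon_dvd_monomial_iff hc (card_image hf) (card_image hg),
    ← Finset.orderEmbOfFin_unique (card_image hf) (fun t => Finset.mem_image_of_mem f (by simp)) hf,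
    ← Finset.orderEmbOfFin_unique (card_image hg) (fun t => Finset.mem_image_of_mem g (by simp)) hg]

theorem exists_isAntidiagonal_of_ussMon_dvd (hc : c ≠ 0) {i j : ℕ} (hA : A.card = k)
    (hB : B.card = k) (hAi : ∀ a ∈ A, (a : ℕ) + 1 ≤ i) (hBj : ∀ b ∈ B, (b : ℕ) + 1 ≤ j)
    (hdvd : ussMon K A B ∣ MvPolynomial.monomial d c) :
    ∃ l, IsAntidiagonal (symmSupport d) i j l ∧ l.length = k := by
  refine ⟨List.ofFn fun t : Fin k =>
    ((A.orderEmbOfFin hA t : ℕ), (B.orderEmbOfFin hB t.rev : ℕ)), ⟨?_, ?_, ?_, ?_⟩,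
    List.length_ofFn⟩
  · rw [List.isChain_iff_pairwise, List.pairwise_ofFn]
    exact fun s t hst => ⟨(A.orderEmbOfFin hA).strictMono hst,
      (B.orderEmbOfFin hB).strictMono (Fin.rev_lt_rev.2 hst)⟩
  · exact List.forall_mem_ofFn_iff.2 ((ussMon_dvd_monomial_iff hc hA hB).1 hdvd)
  · exact List.forall_mem_ofFn_iff.2 fun t => hAi _ (Finset.orderEmbOfFin_mem _ _ _)
  · exact List.forall_mem_ofFn_iff.2 fun t => hBj _ (Finset.orderEmbOfFin_mem _ _ _)

theorem IsAntidiagonal.exists_ussMon_dvd {i j : ℕ} {l : List (ℕ × ℕ)}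
    (h : IsAntidiagonal (symmSupport d) i j l) (hi : i ≤ n) (hj : j ≤ n) (hc : c ≠ 0) :
    ∃ A B : Finset (Fin n), A.card = l.length ∧ B.card = l.length ∧
      (∀ a ∈ A, (a : ℕ) + 1 ≤ i) ∧ (∀ b ∈ B, (b : ℕ) + 1 ≤ j) ∧
      ussMon K A B ∣ MvPolynomial.monomial d c := by
  have row_lt (t : Fin l.length) : l[t].1 < i := h.row_lt _ (List.getElem_mem _)
  have col_lt (t : Fin l.length) : l[t].2 < j := h.col_lt _ (List.getElem_mem _)
  let f (t : Fin l.length) : Fin n := ⟨l[t].1, (row_lt t).trans_le hi⟩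
  let g (t : Fin l.length) : Fin n := ⟨l[t.rev].2, (col_lt t.rev).trans_le hj⟩
  have hf : StrictMono f := fun s t hst => (h.getElem_southWest hst t.2).1
  have hg : StrictMono g := fun s t hst =>
    (h.getElem_southWest (Fin.rev_lt_rev.2 hst) s.rev.2).2
  refine ⟨Finset.univ.image f, Finset.univ.image g, ?_, ?_, ?_, ?_,
    (ussMon_image_dvd_monomial_iff hc hf hg).2 fun t => ?_⟩
  · rw [Finset.card_image_of_injective _ hf.injective, Finset.card_fin]
  · rw [Finset.card_image_of_injective _ hg.injective, Finset.card_fin]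
  · exact Finset.forall_mem_image.2 fun t _ => row_lt t
  · exact Finset.forall_mem_image.2 fun t _ => col_lt t.rev
  · simp only [f, g, Fin.rev_rev]
    exact h.subset _ (List.getElem_mem t.2)

theorem isGreatest_card_ussMon_dvd (hc : c ≠ 0) (d : SSVar n →₀ ℕ) {i j : ℕ} (hi : i ≤ n)
    (hj : j ≤ n) :
    IsGreatest {r : ℕ | ∃ A B : Finset (Fin n), A.card = r ∧ B.card = r ∧
        (∀ a ∈ A, (a : ℕ) + 1 ≤ i) ∧ (∀ b ∈ B, (b : ℕ) + 1 ≤ j) ∧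
        ussMon K A B ∣ MvPolynomial.monomial d c}
      (antidiagonalRank (symmSupport d) i j) := by
  constructor
  · obtain ⟨l, hl, hlen⟩ := exists_length_eq_antidiagonalRank (symmSupport d) i j
    exact hlen ▸ hl.exists_ussMon_dvd hi hj hc
  · rintro r ⟨A, B, hA, hB, hAi, hBj, hdvd⟩
    obtain ⟨l, hl, rfl⟩ := exists_isAntidiagonal_of_ussMon_dvd hc hA hB hAi hBj hdvd
    exact hl.length_le_antidiagonalRank

end SymmSupport

theorem statement11_general (K : Type*) [CommRing K] (n : ℕ) (d : SSVar n →₀ ℕ) {c : K}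
    (hc : c ≠ 0) :
    ∃ z ∈ FPFIn n, ∀ i ≤ n, ∀ j ≤ n,
      IsGreatest {r : ℕ | ∃ A B : Finset (Fin n), A.card = r ∧ B.card = r ∧
          (∀ a ∈ A, (a : ℕ) + 1 ≤ i) ∧ (∀ b ∈ B, (b : ℕ) + 1 ≤ j) ∧
          ussMon K A B ∣ MvPolynomial.monomial d c}
        (rnk z i j) := by
  have htable : IsFPFRankTable (antidiagonalRank (symmSupport d)) :=
    isFPFRankTable_antidiagonalRank (fun _ => swap_mem_symmSupport) diag_notMem_symmSupport
  obtain ⟨z, hz, hrnk⟩ := htable.exists_mem_FPFIn_rnk_eq n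
  refine ⟨z, hz, fun i hi j hj => ?_⟩
  rw [hrnk i hi j hj]
  exact isGreatest_card_ussMon_dvd hc d hi hj

/-- For a monomial `M` in `K[u_{ij} : n ≥ i > j ≥ 1]` there is
`z ∈ FPF_n(I_n)` with `r^ss_M(i,j) = r_z(i,j)` for all `i, j ∈ [n]`, where
`r^ss_M(i,j)` is the largest `r` such that `u^ss_{AB} ∣ M` for some `A ⊆ [i]`,
`B ⊆ [j]` with `|A| = |B| = r`. -/
theorem statement11 (K : Type*) [Field K] (n : ℕ) (hn : 1 ≤ n)
    (M : MvPolynomial (SSVar n) K)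
    (hM : ∃ (d : SSVar n →₀ ℕ) (c : K), c ≠ 0 ∧ M = MvPolynomial.monomial d c) :
    ∃ z ∈ FPFIn n, ∀ i j : ℕ, 1 ≤ i → i ≤ n → 1 ≤ j → j ≤ n →
      IsGreatest {r : ℕ | ∃ A B : Finset (Fin n), A.card = r ∧ B.card = r ∧
          (∀ a ∈ A, (a : ℕ) + 1 ≤ i) ∧ (∀ b ∈ B, (b : ℕ) + 1 ≤ j) ∧ ussMon K A B ∣ M}
        (rnk z i j) := by
  obtain ⟨d, c, hc, rfl⟩ := hM
  obtain ⟨z, hz, hgreatest⟩ := statement11_general K n d hc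
  exact ⟨z, hz, fun i j _ hi _ hj => hgreatest i hi j hj⟩

end Paper
end

section
/- Let m, n >= 1 and let r be a rank table. There exists w in S^{m,n}_infty with r(i,j) = r_w(i,j) for all (i,j) in [m] x [n] if and only if for every (i,j) in [m] x [n] both of the following hold: (a) r(i,j) - r(i,j-1) is 0 or 1, and r(i,j) - r(i-1,j) is 0 or 1; (b) if r(i-1,j) - r(i-1,j-1) = 1, then r(i,j) - r(i,j-1) = 1. -/
namespace Paper

/-!
Extend a table satisfying the conditions on `[m] × [n]` to the quarter plane by
`R(i,j) = min(i, j, r(min(i,m), min(j,n)) + (i-m)⁺ + (j-n)⁺)`. The conditions survive: each row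
difference `R(i+1,·) - R(i,·)` is a step function from `0` to `1`, and its jump is the value at
`i + 1` of a permutation with rank function `R`. Beyond row `m` one has
`R(i+1,j) = min(j, R(i,j) + 1)`, that is, the permutation takes the least value not yet used, so it
has no descent there. Exchanging rows and columns replaces a permutation by its inverse, which turns
each statement about rows into the one about columns.
-/

/-- `r` satisfies the conditions characterising rank functions of permutations on the box
`{0, …, m} × {0, …, n}`: it vanishes on the axes, its horizontal and vertical increments are `0` or
`1`, and its mixed second differences are nonnegative. Given the other conditions, the last one is
equivalent to condition (b) of the theorem, but it is symmetric under exchanging the coordinates. -/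
structure IsRankTableOn (m n : ℕ) (r : ℕ → ℕ → ℕ) : Prop where
  zero_left {j : ℕ} (hj : j ≤ n) : r 0 j = 0
  zero_right {i : ℕ} (hi : i ≤ m) : r i 0 = 0
  step_left {i j : ℕ} (hi : i < m) (hj : j ≤ n) : r (i + 1) j = r i j ∨ r (i + 1) j = r i j + 1
  step_right {i j : ℕ} (hi : i ≤ m) (hj : j < n) : r i (j + 1) = r i j ∨ r i (j + 1) = r i j + 1
  supermodular {i j : ℕ} (hi : i < m) (hj : j < n) :
    r (i + 1) j + r i (j + 1) ≤ r (i + 1) (j + 1) + r i j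

namespace IsRankTableOn

variable {m n : ℕ} {r s : ℕ → ℕ → ℕ}

theorem swap (hr : IsRankTableOn m n r) : IsRankTableOn n m fun i j => r j i where
  zero_left hj := hr.zero_right hj
  zero_right hi := hr.zero_left hi
  step_left hi hj := hr.step_right hj hi
  step_right hi hj := hr.step_left hj hi
  supermodular hi hj := by
    rw [add_comm]
    exact hr.supermodular hj hi

theorem congr (hs : IsRankTableOn m n s) (hrs : ∀ i ≤ m, ∀ j ≤ n, r i j = s i j) :
    IsRankTableOn m n r where
  zero_left hj := by rw [hrs 0 m.zero_le _ hj, hs.zero_left hj]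
  zero_right hi := by rw [hrs _ hi 0 n.zero_le, hs.zero_right hi]
  step_left hi hj := by
    rw [hrs _ hi _ hj, hrs _ hi.le _ hj]
    exact hs.step_left hi hj
  step_right hi hj := by
    rw [hrs _ hi _ hj, hrs _ hi _ hj.le]
    exact hs.step_right hi hj
  supermodular hi hj := by
    rw [hrs _ hi _ hj.le, hrs _ hi.le _ hj, hrs _ hi _ hj, hrs _ hi.le _ hj.le]
    exact hs.supermodular hi hj

theorem le_left (hr : IsRankTableOn m n r) {i j : ℕ} (hi : i ≤ m) (hj : j ≤ n) : r i j ≤ i := by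
  induction i with
  | zero => exact (hr.zero_left hj).le
  | succ i ih =>
    have := ih (by lia)
    have := hr.step_left hi hj
    lia

theorem le_right (hr : IsRankTableOn m n r) {i j : ℕ} (hi : i ≤ m) (hj : j ≤ n) : r i j ≤ j :=
  hr.swap.le_left hj hi

end IsRankTableOn

theorem isRankTableOn_iff {m n : ℕ} {r : ℕ → ℕ → ℕ} (hr0 : ∀ i, r i 0 = 0)
    (hr0' : ∀ j, r 0 j = 0) :
    IsRankTableOn m n r ↔ ∀ i j : ℕ, 1 ≤ i → i ≤ m → 1 ≤ j → j ≤ n →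
      (r i j = r i (j - 1) ∨ r i j = r i (j - 1) + 1) ∧
        (r i j = r (i - 1) j ∨ r i j = r (i - 1) j + 1) ∧
        (r (i - 1) j = r (i - 1) (j - 1) + 1 → r i j = r i (j - 1) + 1) := by
  constructor
  · rintro hr (_ | i) (_ | j) hi him hj hjn
    · contradiction
    · contradiction
    · contradiction
    · have step_right := hr.step_right him hjn
      have supermodular := hr.supermodular him hjn
      simp only [Nat.add_sub_cancel]
      exact ⟨step_right, hr.step_left him hjn, fun _ => by lia⟩
  · intro h
    have step_right {i j : ℕ} (hi : i ≤ m) (hj : j < n) :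
        r i (j + 1) = r i j ∨ r i (j + 1) = r i j + 1 := by
      rcases i.eq_zero_or_pos with rfl | hpos
      · simp only [hr0', true_or]
      · exact (h i (j + 1) hpos hi j.succ_pos hj).1
    refine ⟨fun _ => hr0' _, fun _ => hr0 _, fun {i j} hi hj => ?_, step_right,
      fun {i j} hi hj => ?_⟩
    · rcases j.eq_zero_or_pos with rfl | hpos
      · simp only [hr0, true_or]
      · exact (h (i + 1) j i.succ_pos hi hpos hj).2.1
    · have upper := step_right hi.le hj
      have lower := step_right hi hj
      have propagate := (h (i + 1) (j + 1) i.succ_pos hi j.succ_pos hj).2.2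
      simp only [Nat.add_sub_cancel] at propagate
      lia

section Rank

variable (w : Equiv.Perm ℕ)

theorem rnk_zero_left (j : ℕ) : rnk w 0 j = 0 := by
  simp [rnk]

theorem rnk_zero_right (i : ℕ) : rnk w i 0 = 0 := by
  simp [rnk]

theorem rnk_succ_left (i j : ℕ) :
    rnk w (i + 1) j = rnk w i j + if w (i + 1) ∈ Finset.Icc 1 j then 1 else 0 := by
  unfold rnk
  rw [← Finset.insert_Icc_right_eq_Icc_add_one (by lia), Finset.filter_insert]
  split_ifs
  · exact Finset.card_insert_of_notMem (by simp)
  · rfl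

theorem rnk_inv (i j : ℕ) : rnk w⁻¹ i j = rnk w j i :=
  (Finset.card_equiv w fun a => by simp [and_comm]).symm

theorem isRankTableOn_rnk (m n : ℕ) : IsRankTableOn m n (rnk w) where
  zero_left _ := rnk_zero_left w _
  zero_right _ := rnk_zero_right w _
  step_left _ _ := by
    rw [rnk_succ_left]
    split_ifs <;> simp
  step_right _ _ := by
    rw [← rnk_inv w, ← rnk_inv w, rnk_succ_left]
    split_ifs <;> simp
  supermodular _ _ := by
    rw [rnk_succ_left, rnk_succ_left]
    simp only [Finset.mem_Icc]
    split_ifs <;> lia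

variable {w}

theorem apply_succ_le_iff (hw0 : w 0 = 0) {i j : ℕ} :
    w (i + 1) ≤ j ↔ rnk w (i + 1) j = rnk w i j + 1 := by
  have hpos : w (i + 1) ≠ 0 := fun h => i.succ_ne_zero (w.injective (h.trans hw0.symm))
  rw [rnk_succ_left]
  simp only [Finset.mem_Icc]
  split_ifs <;> lia

theorem desR_subset_Icc_of_rnk {m : ℕ} (hw0 : w 0 = 0)
    (hrnk : ∀ i j, m ≤ i → rnk w (i + 1) j = min j (rnk w i j + 1)) :
    DesR w ⊆ Set.Icc 1 m := by
  rintro (_ | i) ⟨hpos, hdesc⟩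
  · contradiction
  refine ⟨hpos, ?_⟩
  by_contra! hi
  have jump := (apply_succ_le_iff hw0).1 (le_refl (w (i + 1 + 1)))
  have no_jump := (apply_succ_le_iff hw0).not.1 hdesc.not_ge
  have := hrnk i (w (i + 1 + 1)) (by lia)
  have := hrnk (i + 1) (w (i + 1 + 1)) (by lia)
  lia

theorem mem_sInfty_of_rnk_eq_min {N : ℕ} (hw0 : w 0 = 0)
    (hrnk : ∀ i j, N ≤ i → rnk w i j = min i j) : w ∈ SInfty := by
  refine ⟨hw0, (Set.finite_Iic N).subset fun i hi => ?_⟩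
  by_contra! hNi
  obtain ⟨i, rfl⟩ := Nat.exists_eq_add_one.2 (N.zero_le.trans_lt (not_le.1 hNi))
  refine hi (eq_of_forall_ge_iff fun j => ?_)
  rw [Set.mem_Iic] at hNi
  rw [apply_succ_le_iff hw0, hrnk _ _ (by lia), hrnk _ _ (by lia)]
  lia

end Rank

section Realization

theorem exists_forall_lt_iff {P : ℕ → Prop} (hzero : ¬P 0) (hsucc : ∀ j, P j → P (j + 1))
    (hP : ∃ j, P j) : ∃ v, ∀ j, v < j ↔ P j := by
  classical
  obtain ⟨v, hv⟩ := Nat.exists_eq_add_one.2 ((Nat.find_pos hP).2 hzero)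
  refine ⟨v, fun j => ?_⟩
  rw [← Nat.add_one_le_iff, ← hv]
  exact ⟨fun hj => Nat.le_induction (Nat.find_spec hP) (fun k _ => hsucc k) j hj, Nat.find_min' hP⟩

variable {R : ℕ → ℕ → ℕ} {σ τ : ℕ → ℕ}

theorem exists_row_jump (hR : ∀ m n, IsRankTableOn m n R) (hfull : ∀ i, ∃ j, R i j = i) :
    ∃ σ : ℕ → ℕ, ∀ i j, σ i < j ↔ R (i + 1) j = R i j + 1 := by
  have row_jump (i : ℕ) : ∃ v, ∀ j, v < j ↔ R (i + 1) j = R i j + 1 := by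
    refine exists_forall_lt_iff ?_ (fun j hj => ?_) ?_
    · have := (hR (i + 1) 0).zero_right le_rfl
      lia
    · have hRij := hR (i + 1) (j + 1)
      have := hRij.supermodular i.lt_succ_self j.lt_succ_self
      have := hRij.step_left i.lt_succ_self le_rfl
      lia
    · obtain ⟨j, hj⟩ := hfull (i + 1)
      have := (hR (i + 1) j).step_left i.lt_succ_self le_rfl
      have := (hR i j).le_left le_rfl le_rfl
      exact ⟨j, by lia⟩
  choose σ hσ using row_jump
  exact ⟨σ, hσ⟩

theorem col_jump_row_jump (hR : ∀ m n, IsRankTableOn m n R)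
    (hσ : ∀ i j, σ i < j ↔ R (i + 1) j = R i j + 1)
    (hτ : ∀ j i, τ j < i ↔ R i (j + 1) = R i j + 1) (i : ℕ) : τ (σ i) = i := by
  have hRi := hR (i + 1) (σ i + 1)
  have row_jump := (hσ i (σ i + 1)).1 (σ i).lt_succ_self
  have no_row_jump := (hσ i (σ i)).not.1 (lt_irrefl _)
  have := hRi.step_left i.lt_succ_self (σ i).le_succ
  have := hRi.step_right i.le_succ (σ i).lt_succ_self
  have := hRi.step_right le_rfl (σ i).lt_succ_self
  have := hτ (σ i) i
  have := hτ (σ i) (i + 1)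
  lia

theorem exists_perm_rnk_eq (hR : ∀ m n, IsRankTableOn m n R) (hrow : ∀ i, ∃ j, R i j = i)
    (hcol : ∀ j, ∃ i, R i j = j) : ∃ w : Equiv.Perm ℕ, w 0 = 0 ∧ ∀ i j, rnk w i j = R i j := by
  have hR' (m n : ℕ) : IsRankTableOn m n fun i j => R j i := (hR n m).swap
  obtain ⟨σ, hσ⟩ := exists_row_jump hR hrow
  obtain ⟨τ, hτ⟩ := exists_row_jump hR' hcol
  let e : Equiv.Perm ℕ := ⟨σ, τ, col_jump_row_jump hR hσ hτ, col_jump_row_jump hR' hτ hσ⟩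
  -- `σ` is indexed from `0`; shifting by one gives a permutation of the positive integers.
  let w : Equiv.Perm ℕ := e.viaEmbedding (addRightEmbedding 1)
  have w_succ (i : ℕ) : w (i + 1) = σ i + 1 := e.viaEmbedding_apply (addRightEmbedding 1) i
  refine ⟨w, e.viaEmbedding_apply_of_notMem _ 0 (by simp), fun i j => ?_⟩
  induction i with
  | zero => rw [rnk_zero_left, (hR 0 j).zero_left le_rfl]
  | succ i ih =>
    have := (hR (i + 1) j).step_left i.lt_succ_self le_rfl
    have := hσ i j
    rw [rnk_succ_left, ih, w_succ]
    simp only [Finset.mem_Icc]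
    split_ifs <;> lia

end Realization

/-- The extension of a table from `{0, …, m} × {0, …, n}` to the quarter plane: each row after the
`m`-th and each column after the `n`-th raises the rank by one, as long as the rank stays bounded
by the numbers of rows and columns. The truncated subtractions are the positive parts `(i-m)⁺`
and `(j-n)⁺`. -/
def greedyExtension (m n : ℕ) (r : ℕ → ℕ → ℕ) (i j : ℕ) : ℕ :=
  min (min i j) (r (min i m) (min j n) + (i - m) + (j - n))

section Extension

variable (m n : ℕ) (r : ℕ → ℕ → ℕ)

theorem greedyExtension_swap (i j : ℕ) :
    greedyExtension n m (fun i j => r j i) j i = greedyExtension m n r i j := by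
  simp only [greedyExtension, min_comm j i, add_right_comm]

theorem greedyExtension_le_right (i j : ℕ) : greedyExtension m n r i j ≤ j :=
  (min_le_left _ _).trans (min_le_right _ _)

theorem greedyExtension_succ_left {i : ℕ} (hi : m ≤ i) (j : ℕ) :
    greedyExtension m n r (i + 1) j = min j (greedyExtension m n r i j + 1) := by
  unfold greedyExtension
  rw [min_eq_right hi, min_eq_right (hi.trans i.le_succ)]
  lia

theorem greedyExtension_succ_right (i : ℕ) {j : ℕ} (hj : n ≤ j) :
    greedyExtension m n r i (j + 1) = min i (greedyExtension m n r i j + 1) := by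
  simp only [← greedyExtension_swap m n r]
  exact greedyExtension_succ_left n m _ hj i

theorem greedyExtension_add_right (i : ℕ) : greedyExtension m n r i (i + n) = i := by
  unfold greedyExtension
  lia

theorem greedyExtension_add_left (j : ℕ) : greedyExtension m n r (j + m) j = j := by
  rw [← greedyExtension_swap, greedyExtension_add_right]

theorem greedyExtension_eq_min {i : ℕ} (hi : m + n ≤ i) (j : ℕ) :
    greedyExtension m n r i j = min i j := by
  unfold greedyExtension
  lia

end Extension

namespace IsRankTableOn

variable {m n : ℕ} {r : ℕ → ℕ → ℕ}

theorem greedyExtension_eq (hr : IsRankTableOn m n r) {i j : ℕ} (hi : i ≤ m) (hj : j ≤ n) :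
    greedyExtension m n r i j = r i j := by
  have := hr.le_left hi hj
  have := hr.le_right hi hj
  unfold greedyExtension
  rw [min_eq_left hi, min_eq_left hj]
  lia

theorem greedyExtension_step_left (hr : IsRankTableOn m n r) (i j : ℕ) :
    greedyExtension m n r (i + 1) j = greedyExtension m n r i j ∨
      greedyExtension m n r (i + 1) j = greedyExtension m n r i j + 1 := by
  rcases lt_or_ge i m with hi | hi
  · have := hr.step_left hi (min_le_right j n)
    unfold greedyExtension
    rw [min_eq_left hi.le, min_eq_left (Nat.add_one_le_of_lt hi)]
    lia
  · have := greedyExtension_succ_left m n r hi j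
    have := greedyExtension_le_right m n r i j
    lia

theorem greedyExtension_step_right (hr : IsRankTableOn m n r) (i j : ℕ) :
    greedyExtension m n r i (j + 1) = greedyExtension m n r i j ∨
      greedyExtension m n r i (j + 1) = greedyExtension m n r i j + 1 := by
  simp only [← greedyExtension_swap m n r]
  exact hr.swap.greedyExtension_step_left j i

theorem greedyExtension_supermodular_of_le (hr : IsRankTableOn m n r) {i : ℕ} (hi : m ≤ i) (j : ℕ) :
    greedyExtension m n r (i + 1) j + greedyExtension m n r i (j + 1) ≤
      greedyExtension m n r (i + 1) (j + 1) + greedyExtension m n r i j := by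
  rw [greedyExtension_succ_left m n r hi, greedyExtension_succ_left m n r hi]
  have := hr.greedyExtension_step_right i j
  have := greedyExtension_le_right m n r i j
  lia

theorem greedyExtension_supermodular (hr : IsRankTableOn m n r) (i j : ℕ) :
    greedyExtension m n r (i + 1) j + greedyExtension m n r i (j + 1) ≤
      greedyExtension m n r (i + 1) (j + 1) + greedyExtension m n r i j := by
  rcases le_or_gt m i with hi | hi
  · exact hr.greedyExtension_supermodular_of_le hi j
  rcases le_or_gt n j with hj | hj
  · simp only [← greedyExtension_swap m n r]
    rw [add_comm]
    exact hr.swap.greedyExtension_supermodular_of_le hj i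
  · rw [hr.greedyExtension_eq hi hj.le, hr.greedyExtension_eq hi.le hj,
      hr.greedyExtension_eq hi hj, hr.greedyExtension_eq hi.le hj.le]
    exact hr.supermodular hi hj

theorem greedyExtension (hr : IsRankTableOn m n r) (M N : ℕ) :
    IsRankTableOn M N (greedyExtension m n r) where
  zero_left _ := by simp [Paper.greedyExtension]
  zero_right _ := by simp [Paper.greedyExtension]
  step_left _ _ := hr.greedyExtension_step_left _ _
  step_right _ _ := hr.greedyExtension_step_right _ _
  supermodular _ _ := hr.greedyExtension_supermodular _ _

end IsRankTableOn

theorem mem_smnInfty_of_rnk_eq_greedyExtension {m n : ℕ} {r : ℕ → ℕ → ℕ} {w : Equiv.Perm ℕ}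
    (hw0 : w 0 = 0) (hw : ∀ i j, rnk w i j = greedyExtension m n r i j) : w ∈ SmnInfty m n := by
  have hw0' : w⁻¹ 0 = 0 := Equiv.Perm.inv_eq_iff_eq.2 hw0.symm
  refine ⟨mem_sInfty_of_rnk_eq_min (N := m + n) hw0 fun i j hi => ?_,
    desR_subset_Icc_of_rnk hw0 fun i j hi => ?_, desR_subset_Icc_of_rnk hw0' fun j i hj => ?_⟩
  · rw [hw, greedyExtension_eq_min m n r hi]
  · rw [hw, hw, greedyExtension_succ_left m n r hi]
  · rw [rnk_inv, rnk_inv, hw, hw, greedyExtension_succ_right m n r i hj]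

/-- A rank table `r` agrees on `[m] × [n]` with `r_w` for some
`w ∈ S^{m,n}_∞` iff for every `(i,j) ∈ [m] × [n]`:
(a) `r(i,j) - r(i,j-1)` and `r(i,j) - r(i-1,j)` are each `0` or `1`, and
(b) `r(i-1,j) - r(i-1,j-1) = 1` implies `r(i,j) - r(i,j-1) = 1`. -/
theorem statement12 (m n : ℕ) (hm : 1 ≤ m) (hn : 1 ≤ n) (r : ℕ → ℕ → ℕ)
    (hr0 : ∀ i, r i 0 = 0) (hr0' : ∀ j, r 0 j = 0) :
    (∃ w ∈ SmnInfty m n,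
        ∀ i j : ℕ, 1 ≤ i → i ≤ m → 1 ≤ j → j ≤ n → r i j = rnk w i j) ↔
      ∀ i j : ℕ, 1 ≤ i → i ≤ m → 1 ≤ j → j ≤ n →
        (r i j = r i (j - 1) ∨ r i j = r i (j - 1) + 1) ∧
          (r i j = r (i - 1) j ∨ r i j = r (i - 1) j + 1) ∧
          (r (i - 1) j = r (i - 1) (j - 1) + 1 → r i j = r i (j - 1) + 1) := by
  rw [← isRankTableOn_iff hr0 hr0']
  constructor
  · rintro ⟨w, -, hw⟩
    refine (isRankTableOn_rnk w m n).congr fun i hi j hj => ?_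
    rcases i.eq_zero_or_pos with rfl | hi0
    · rw [hr0', rnk_zero_left]
    rcases j.eq_zero_or_pos with rfl | hj0
    · rw [hr0, rnk_zero_right]
    exact hw i j hi0 hi hj0 hj
  · intro hr
    obtain ⟨w, hw0, hw⟩ := exists_perm_rnk_eq hr.greedyExtension
      (fun i => ⟨_, greedyExtension_add_right m n r i⟩)
      (fun j => ⟨_, greedyExtension_add_left m n r j⟩)
    refine ⟨w, mem_smnInfty_of_rnk_eq_greedyExtension hw0 hw, fun i j _ hi _ hj => ?_⟩
    rw [hw, hr.greedyExtension_eq hi hj]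

end Paper
end

section
/- Let K be a field and fix a term order on the polynomial ring K[x_1,...,x_N]. If I and J are ideals that are homogeneous with respect to total degree and init(I + J) = init(I) + init(J), then init(I intersect J) = init(I) intersect init(J). -/
namespace Paper

/-!
For a monomial order and an exponent `d`, let `L_d(I)` be the ideal of coefficients at `d` of the
elements of `I` all of whose exponents are at most `d`. A polynomial lies in the initial ideal of
`I` exactly when its coefficient at every `d` lies in `L_d(I)`, so both sides of the theorem can be
compared one exponent at a time.

The assumption says `L_d(I + J) = L_d(I) + L_d(J)`. Cancelling leading terms and descending along
the well-founded order, it follows that every element of `I + J` with exponents below `d` is a sum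
`a + b` with `a ∈ I`, `b ∈ J`, again with exponents below `d`. If now `f ∈ I` and `g ∈ J` have the
same coefficient at `d` and no larger exponents, write `f - g = a + b` in this way: then
`f - a = g + b` lies in `I ∩ J` and still has that coefficient at `d`.
-/

open MvPolynomial
open scoped MonomialOrder

section InitialIdeal

variable {σ R : Type*} [CommSemiring R] {m : MonomialOrder σ}
  {I J : Ideal (MvPolynomial σ R)} {d e : σ →₀ ℕ} {f p : MvPolynomial σ R}

variable (m R d) in
/-- The polynomials all of whose exponents are at most `d`; it contains `0` for every `d`. -/
noncomputable def degreeLE : Submodule R (MvPolynomial σ R) :=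
  restrictSupport R {e | e ≼[m] d}

variable (m R d) in
/-- The polynomials all of whose exponents are strictly below `d`. Unlike the condition
`m.degree f ≺[m] d`, this admits `0` also when `d = 0`. -/
noncomputable def degreeLT : Submodule R (MvPolynomial σ R) :=
  restrictSupport R {e | e ≺[m] d}

theorem degreeLE_le_degreeLT (h : e ≺[m] d) : degreeLE R m e ≤ degreeLT R m d :=
  restrictSupport_mono R fun _ hc => lt_of_le_of_lt hc h

theorem degreeLT_le_degreeLE : degreeLT R m d ≤ degreeLE R m d :=
  restrictSupport_mono R fun _ => le_of_lt

theorem degreeLT_mono (h : e ≼[m] d) : degreeLT R m e ≤ degreeLT R m d :=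
  restrictSupport_mono R fun _ hc => lt_of_lt_of_le hc h

theorem mem_degreeLE_degree (f : MvPolynomial σ R) : f ∈ degreeLE R m (m.degree f) :=
  fun _ he => m.le_degree he

theorem coeff_eq_zero_of_mem_degreeLT (hf : f ∈ degreeLT R m d) : coeff d f = 0 := by
  by_contra hd
  exact lt_irrefl _ (hf (mem_support_iff.mpr hd))

theorem mem_degreeLT_of_coeff_eq_zero (hf : f ∈ degreeLE R m d) (hd : coeff d f = 0) :
    f ∈ degreeLT R m d := by
  refine fun e he => lt_of_le_of_ne (hf he) fun hed => ?_
  rw [m.toSyn.injective hed] at he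
  exact mem_support_iff.mp he hd

theorem degree_lt_of_mem_degreeLT (hf : f ∈ degreeLT R m d) (hf0 : f ≠ 0) :
    m.degree f ≺[m] d :=
  hf (m.degree_mem_support hf0)

theorem degree_eq_of_mem_degreeLE (hf : f ∈ degreeLE R m d) (hd : coeff d f ≠ 0) :
    m.degree f = d :=
  m.toSyn.injective <|
    le_antisymm (m.degree_le_iff.mpr fun _ he => hf he) (m.le_degree (mem_support_iff.mpr hd))

theorem monomial_mem_degreeLE (c : R) : monomial d c ∈ degreeLE R m d :=
  (monomial_mem_restrictSupport R).mpr (Or.inl le_rfl)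

open scoped Pointwise in
theorem mul_mem_degreeLE (hf : f ∈ degreeLE R m d) (hp : p ∈ degreeLE R m e) :
    f * p ∈ degreeLE R m (d + e) := by
  have hsub : {c | c ≼[m] d} + {c | c ≼[m] e} ⊆ {c | c ≼[m] (d + e)} := by
    rintro _ ⟨a, ha, b, hb, rfl⟩
    simpa only [Set.mem_ofPred_eq, map_add] using add_le_add ha hb
  refine restrictSupport_mono R hsub ?_
  rw [restrictSupport_add]
  exact Submodule.mul_mem_mul hf hp

variable (m I d) in
/-- The ideal `L_d(I)` of coefficients at `d` of the elements of `I` whose exponents are all at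
most `d`, that is, `0` and the leading coefficients of the elements of `I` of degree `d`. -/
noncomputable def leadingCoeffIdeal : Ideal R :=
  (I.restrictScalars R ⊓ degreeLE R m d).map (lcoeff R d)

theorem mem_leadingCoeffIdeal {c : R} :
    c ∈ leadingCoeffIdeal m I d ↔ ∃ f ∈ I, f ∈ degreeLE R m d ∧ coeff d f = c := by
  simp [leadingCoeffIdeal, and_assoc]

theorem leadingCoeffIdeal_mono_left (h : I ≤ J) :
    leadingCoeffIdeal m I d ≤ leadingCoeffIdeal m J d :=
  Submodule.map_mono (inf_le_inf_right _ h)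

theorem leadingCoeffIdeal_mono_right (h : e ≤ d) :
    leadingCoeffIdeal m I e ≤ leadingCoeffIdeal m I d := by
  obtain ⟨b, rfl⟩ := le_iff_exists_add'.mp h
  intro c hc
  obtain ⟨f, hfI, hf, rfl⟩ := mem_leadingCoeffIdeal.mp hc
  refine mem_leadingCoeffIdeal.mpr
    ⟨monomial b 1 * f, I.mul_mem_left _ hfI, mul_mem_degreeLE (monomial_mem_degreeLE 1) hf, ?_⟩
  rw [coeff_monomial_mul, one_mul]

variable (m I) in
/-- The initial ideal, generated by the leading terms (with their coefficients) of the elements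
of `I`. Over a field it is also generated by the leading monomials. -/
noncomputable def initialIdeal : Ideal (MvPolynomial σ R) :=
  Ideal.span (m.leadingTerm '' I)

theorem coeff_leadingTerm_mem_leadingCoeffIdeal (hf : f ∈ I) :
    coeff d (m.leadingTerm f) ∈ leadingCoeffIdeal m I d := by
  classical
  rw [MonomialOrder.leadingTerm, coeff_monomial]
  split_ifs with h
  · subst h
    exact mem_leadingCoeffIdeal.mpr ⟨f, hf, mem_degreeLE_degree f, rfl⟩
  · exact zero_mem _

theorem monomial_mem_initialIdeal {c : R} (hc : c ∈ leadingCoeffIdeal m I d) :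
    monomial d c ∈ initialIdeal m I := by
  obtain ⟨f, hfI, hf, rfl⟩ := mem_leadingCoeffIdeal.mp hc
  by_cases hd : coeff d f = 0
  · simp [hd]
  · refine Ideal.subset_span ⟨f, hfI, ?_⟩
    rw [MonomialOrder.leadingTerm, MonomialOrder.leadingCoeff, degree_eq_of_mem_degreeLE hf hd]

theorem mem_initialIdeal_iff :
    p ∈ initialIdeal m I ↔ ∀ d, coeff d p ∈ leadingCoeffIdeal m I d := by
  classical
  refine ⟨fun hp => ?_, fun hp => ?_⟩
  · induction hp using Submodule.span_induction with
    | mem _ h =>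
      obtain ⟨f, hf, rfl⟩ := h
      exact fun d => coeff_leadingTerm_mem_leadingCoeffIdeal hf
    | zero => simp
    | add p q _ _ hp hq => exact fun d => add_mem (hp d) (hq d)
    | smul q p _ hp =>
      intro d
      rw [smul_eq_mul, coeff_mul]
      exact sum_mem fun x hx => Ideal.mul_mem_left _ _ <|
        leadingCoeffIdeal_mono_right (Finset.HasAntidiagonal.antidiagonal.snd_le hx) (hp x.2)
  · rw [p.as_sum]
    exact sum_mem fun d _ => monomial_mem_initialIdeal (hp d)

theorem leadingCoeffIdeal_sup_le
    (h : initialIdeal m (I ⊔ J) = initialIdeal m I ⊔ initialIdeal m J) (d : σ →₀ ℕ) :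
    leadingCoeffIdeal m (I ⊔ J) d ≤ leadingCoeffIdeal m I d ⊔ leadingCoeffIdeal m J d := by
  classical
  intro c hc
  obtain ⟨p, hp, q, hq, hpq⟩ := Submodule.mem_sup.mp (h ▸ monomial_mem_initialIdeal hc)
  have hcoeff : coeff d p + coeff d q = c := by rw [← coeff_add, hpq, coeff_monomial, if_pos rfl]
  exact hcoeff ▸
    Submodule.add_mem_sup (mem_initialIdeal_iff.mp hp d) (mem_initialIdeal_iff.mp hq d)

end InitialIdeal

section Intersection

variable {σ R : Type*} [CommRing R] {m : MonomialOrder σ}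
  {I J : Ideal (MvPolynomial σ R)} {d : σ →₀ ℕ} {p : MvPolynomial σ R}

theorem exists_add_sub_mem_degreeLT
    (hd : leadingCoeffIdeal m (I ⊔ J) d ≤ leadingCoeffIdeal m I d ⊔ leadingCoeffIdeal m J d)
    (hpIJ : p ∈ I ⊔ J) (hp : p ∈ degreeLE R m d) :
    ∃ f ∈ I, f ∈ degreeLE R m d ∧ ∃ g ∈ J, g ∈ degreeLE R m d ∧
      p - (f + g) ∈ degreeLT R m d := by
  obtain ⟨_, hα, _, hβ, hsum⟩ :=
    Submodule.mem_sup.mp (hd (mem_leadingCoeffIdeal.mpr ⟨p, hpIJ, hp, rfl⟩))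
  obtain ⟨f, hfI, hf, rfl⟩ := mem_leadingCoeffIdeal.mp hα
  obtain ⟨g, hgJ, hg, rfl⟩ := mem_leadingCoeffIdeal.mp hβ
  refine ⟨f, hfI, hf, g, hgJ, hg,
    mem_degreeLT_of_coeff_eq_zero (sub_mem hp (add_mem hf hg)) ?_⟩
  rw [coeff_sub, coeff_add, hsum, sub_self]

theorem exists_add_eq_of_mem_degreeLT
    (h : ∀ e, leadingCoeffIdeal m (I ⊔ J) e ≤ leadingCoeffIdeal m I e ⊔ leadingCoeffIdeal m J e)
    (hpIJ : p ∈ I ⊔ J) (hp : p ∈ degreeLT R m d) :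
    ∃ a ∈ I, a ∈ degreeLT R m d ∧ ∃ b ∈ J, b ∈ degreeLT R m d ∧ a + b = p := by
  induction d using (InvImage.wf m.toSyn wellFounded_lt).induction generalizing p with
  | _ d ih =>
    obtain rfl | hp0 := eq_or_ne p 0
    · exact ⟨0, I.zero_mem, zero_mem _, 0, J.zero_mem, zero_mem _, add_zero 0⟩
    have hlt : m.degree p ≺[m] d := degree_lt_of_mem_degreeLT hp hp0
    obtain ⟨f, hfI, hf, g, hgJ, hg, hrest⟩ :=
      exists_add_sub_mem_degreeLT (h _) hpIJ (mem_degreeLE_degree p)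
    have hrestIJ : p - (f + g) ∈ I ⊔ J := sub_mem hpIJ (Submodule.add_mem_sup hfI hgJ)
    obtain ⟨a, haI, ha, b, hbJ, hb, hab⟩ := ih _ hlt hrestIJ hrest
    refine ⟨f + a, add_mem hfI haI, add_mem (degreeLE_le_degreeLT hlt hf) (degreeLT_mono hlt.le ha),
      g + b, add_mem hgJ hbJ, add_mem (degreeLE_le_degreeLT hlt hg) (degreeLT_mono hlt.le hb), ?_⟩
    linear_combination hab

theorem leadingCoeffIdeal_inf
    (h : ∀ e, leadingCoeffIdeal m (I ⊔ J) e ≤ leadingCoeffIdeal m I e ⊔ leadingCoeffIdeal m J e)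
    (d : σ →₀ ℕ) :
    leadingCoeffIdeal m (I ⊓ J) d = leadingCoeffIdeal m I d ⊓ leadingCoeffIdeal m J d := by
  refine le_antisymm (le_inf (leadingCoeffIdeal_mono_left inf_le_left)
    (leadingCoeffIdeal_mono_left inf_le_right)) ?_
  rintro c ⟨hcI, hcJ⟩
  obtain ⟨f, hfI, hf, hfc⟩ := mem_leadingCoeffIdeal.mp hcI
  obtain ⟨g, hgJ, hg, hgc⟩ := mem_leadingCoeffIdeal.mp hcJ
  have hfg : f - g ∈ degreeLT R m d :=
    mem_degreeLT_of_coeff_eq_zero (sub_mem hf hg) (by rw [coeff_sub, hfc, hgc, sub_self])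
  have hfgIJ : f - g ∈ I ⊔ J := sub_mem (Ideal.mem_sup_left hfI) (Ideal.mem_sup_right hgJ)
  obtain ⟨a, haI, ha, b, hbJ, -, hab⟩ := exists_add_eq_of_mem_degreeLT h hfgIJ hfg
  have hfa : f - a = g + b := by linear_combination -hab
  refine mem_leadingCoeffIdeal.mpr ⟨f - a, ⟨sub_mem hfI haI, hfa ▸ add_mem hgJ hbJ⟩,
    sub_mem hf (degreeLT_le_degreeLE ha), ?_⟩
  rw [coeff_sub, hfc, coeff_eq_zero_of_mem_degreeLT ha, sub_zero]

theorem statement13_general (m : MonomialOrder σ) (I J : Ideal (MvPolynomial σ R))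
    (h : initialIdeal m (I + J) = initialIdeal m I + initialIdeal m J) :
    initialIdeal m (I ⊓ J) = initialIdeal m I ⊓ initialIdeal m J := by
  ext p
  simp only [Submodule.mem_inf, mem_initialIdeal_iff,
    leadingCoeffIdeal_inf (leadingCoeffIdeal_sup_le h), forall_and]

end Intersection

namespace TermOrder

variable {σ : Type*} (τ : TermOrder σ)

/-- A copy of the exponents, carrying the linear order `τ` in place of the divisibility order. -/
def Syn (_τ : TermOrder σ) : Type _ := σ →₀ ℕ

noncomputable instance : AddCommMonoid τ.Syn := inferInstanceAs (AddCommMonoid (σ →₀ ℕ))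

noncomputable instance : LinearOrder τ.Syn where
  le := τ.le
  le_refl a := or_self_iff.mp (τ.total a a)
  le_trans := τ.trans
  le_antisymm := τ.antisymm
  le_total := τ.total
  toDecidableLE := Classical.decRel _

instance : IsOrderedAddMonoid τ.Syn where
  add_le_add_left a b h c := τ.add_le_add_right a b c h

/-- The identity, viewed as a map from the exponents to their `τ`-ordered copy. -/
noncomputable def toSyn : (σ →₀ ℕ) ≃+ τ.Syn := AddEquiv.refl _

theorem toSyn_monotone : Monotone τ.toSyn := by
  intro a b hab
  obtain ⟨c, rfl⟩ := exists_add_of_le hab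
  rw [map_add]
  exact le_add_of_nonneg_right (τ.zero_le c)

-- Dickson's lemma: divisibility is a well-quasi-order, and `τ` extends it.
instance [Finite σ] : WellFoundedLT τ.Syn :=
  wellQuasiOrderedLE_iff_wellFoundedLT.mp
    ⟨wellQuasiOrdered_le.of_surjective ⟨τ.toSyn, fun h => τ.toSyn_monotone h⟩ τ.toSyn.surjective⟩

/-- A term order in finitely many variables, as one of Mathlib's monomial orders. -/
noncomputable def toMonomialOrder [Finite σ] : MonomialOrder σ where
  syn := τ.Syn
  toSyn := τ.toSyn
  toSyn_monotone := τ.toSyn_monotone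

theorem eq_degree_iff [Finite σ] {R : Type*} [CommSemiring R] {f : MvPolynomial σ R} (hf : f ≠ 0)
    {d : σ →₀ ℕ} :
    d = τ.toMonomialOrder.degree f ↔ d ∈ f.support ∧ ∀ e ∈ f.support, τ.le e d := by
  constructor
  · rintro rfl
    exact ⟨τ.toMonomialOrder.degree_mem_support hf, fun _ => τ.toMonomialOrder.le_degree⟩
  · rintro ⟨hd, hmax⟩
    exact τ.antisymm _ _ (τ.toMonomialOrder.le_degree hd) (τ.toMonomialOrder.degree_le_iff.mpr hmax)

theorem initIdealLe_eq_initialIdeal [Finite σ] {K : Type*} [Field K]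
    (I : Ideal (MvPolynomial σ K)) :
    initIdealLe τ I = initialIdeal τ.toMonomialOrder I := by
  rw [initialIdeal, MonomialOrder.span_leadingTerm_eq_span_monomial', initIdealLe]
  congr 1
  ext g
  constructor
  · rintro ⟨f, hf, hf0, d, hd, hmax, rfl⟩
    exact ⟨f, ⟨hf, hf0⟩, by rw [(τ.eq_degree_iff hf0).mpr ⟨hd, hmax⟩]⟩
  · rintro ⟨f, ⟨hf, hf0⟩, rfl⟩
    obtain ⟨hd, hmax⟩ := (τ.eq_degree_iff hf0).mp rfl
    exact ⟨f, hf, hf0, _, hd, hmax, rfl⟩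

end TermOrder

/-- Fix a term order on `K[x_1, ..., x_N]`. If `I` and `J` are
homogeneous ideals with `init(I + J) = init(I) + init(J)`, then
`init(I ∩ J) = init(I) ∩ init(J)`. -/
theorem statement13 (K : Type*) [Field K] (N : ℕ) (τ : TermOrder (Fin N))
    (I J : Ideal (MvPolynomial (Fin N) K)) (hI : IsHomogIdeal I) (hJ : IsHomogIdeal J)
    (h : initIdealLe τ (I + J) = initIdealLe τ I + initIdealLe τ J) :
    initIdealLe τ (I ⊓ J) = initIdealLe τ I ⊓ initIdealLe τ J := by
  simp only [τ.initIdealLe_eq_initialIdeal] at h ⊢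
  exact statement13_general τ.toMonomialOrder I J h

end Paper
end

section
/- Let K be a field and let J subset of I be ideals of K[x_1,...,x_N] that are homogeneous with respect to total degree. Suppose f is a non-constant homogeneous polynomial such that I intersect (f) = f*I and I + (f) = J + (f), where (f) denotes the principal ideal generated by f and f*I := {f*g : g in I} generates the ideal of all multiples of f by elements of I. Then I = J. -/
namespace Paper

/-!
Write `𝔪` for the ideal of the variables and `A = (f)`, so `A ≤ 𝔪`. By the modular law,
`I ⊓ A = A * I` and `I ⊔ A = J ⊔ A` give `I ≤ J ⊔ A * I`. Substituting this inclusion into itself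
yields `I ≤ J ⊔ 𝔪 ^ k` for every `k`. An element of `𝔪 ^ k` has no nonzero homogeneous component of
degree below `k`, so each homogeneous component of an element of `I` is also one of some element
of `J`, hence lies in `J`.
-/

section IdealLattice

theorem le_sup_mul_of_inf_le_mul {R : Type*} [CommRing R] {I J A : Ideal R} (hJI : J ≤ I)
    (hIA : I ⊓ A ≤ A * I) (hIJ : I ≤ J ⊔ A) : I ≤ J ⊔ A * I :=
  calc
    I = (J ⊔ A) ⊓ I := (inf_eq_right.mpr hIJ).symm
    _ = J ⊔ A ⊓ I := sup_inf_assoc_of_le A hJI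
    _ = J ⊔ I ⊓ A := by rw [inf_comm]
    _ ≤ J ⊔ A * I := sup_le_sup_left hIA J

theorem le_sup_pow_mul_of_le_sup_mul {R : Type*} [CommSemiring R] {I J A : Ideal R}
    (h : I ≤ J ⊔ A * I) (k : ℕ) : I ≤ J ⊔ A ^ k * I := by
  induction k with
  | zero => simp
  | succ k ih =>
    calc
      I ≤ J ⊔ A * I := h
      _ ≤ J ⊔ A * (J ⊔ A ^ k * I) := sup_le_sup_left (Ideal.mul_mono_right ih) J
      _ = J ⊔ A * J ⊔ A ^ (k + 1) * I := by rw [Ideal.mul_sup, ← mul_assoc, ← pow_succ', sup_assoc]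
      _ = J ⊔ A ^ (k + 1) * I := by rw [sup_eq_left.mpr (Ideal.mul_le_right : A * J ≤ J)]

theorem span_setOf_mul_eq_span_singleton_mul {R : Type*} [CommSemiring R] (f : R) (I : Ideal R) :
    Ideal.span {g : R | ∃ i ∈ I, g = f * i} = Ideal.span {f} * I := by
  have carrier_eq : {g : R | ∃ i ∈ I, g = f * i} = (Ideal.span {f} * I : Ideal R) := by
    ext g
    simp only [Set.mem_ofPred_eq, SetLike.mem_coe, Ideal.mem_span_singleton_mul, eq_comm]
  rw [carrier_eq, Ideal.span_eq]

end IdealLattice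

section HomogeneousIdeal

open MvPolynomial

variable {σ R : Type*} [CommSemiring R]

theorem homogeneousComponent_eq_zero_of_mem_pow_idealOfVars {n k : ℕ} (hnk : n < k)
    {p : MvPolynomial σ R} (hp : p ∈ idealOfVars σ R ^ k) : homogeneousComponent n p = 0 :=
  homogeneousComponent_eq_zero' n p fun x hx =>
    (hnk.trans_le ((mem_pow_idealOfVars_iff k p).mp hp x hx)).ne'

theorem mem_idealOfVars_of_isHomogeneous_of_ne_C {f : MvPolynomial σ R} {d : ℕ}
    (hf : f.IsHomogeneous d) (hfc : ∀ c : R, f ≠ C c) : f ∈ idealOfVars σ R := by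
  have d_ne_zero : d ≠ 0 := by
    rintro rfl
    exact hfc _ (totalDegree_eq_zero_iff_eq_C.mp (Nat.le_zero.mp hf.totalDegree_le))
  rw [← pow_one (idealOfVars σ R), mem_pow_idealOfVars_iff']
  intro x hx
  exact hf.coeff_eq_zero (by omega)

theorem IsHomogIdeal.mem_of_forall_mem_sup_pow_idealOfVars {J : Ideal (MvPolynomial σ R)}
    (hJ : IsHomogIdeal J) {g : MvPolynomial σ R} (hg : ∀ k, g ∈ J ⊔ idealOfVars σ R ^ k) :
    g ∈ J := by
  rw [← sum_homogeneousComponent g]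
  refine J.sum_mem fun n _ => ?_
  obtain ⟨j, hj, p, hp, rfl⟩ := Submodule.mem_sup.mp (hg (n + 1))
  rw [map_add, homogeneousComponent_eq_zero_of_mem_pow_idealOfVars n.lt_succ_self hp, add_zero]
  exact hJ j hj n

theorem IsHomogIdeal.le_of_le_sup_mul {I J A : Ideal (MvPolynomial σ R)} (hJ : IsHomogIdeal J)
    (hA : A ≤ idealOfVars σ R) (h : I ≤ J ⊔ A * I) : I ≤ J := by
  have le_sup_pow (k : ℕ) : I ≤ J ⊔ idealOfVars σ R ^ k :=
    calc
      I ≤ J ⊔ A ^ k * I := le_sup_pow_mul_of_le_sup_mul h k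
      _ ≤ J ⊔ A ^ k := sup_le_sup_left Ideal.mul_le_left J
      _ ≤ J ⊔ idealOfVars σ R ^ k := sup_le_sup_left (Ideal.pow_right_mono hA k) J
  exact fun g hg => hJ.mem_of_forall_mem_sup_pow_idealOfVars fun k => le_sup_pow k hg

end HomogeneousIdeal

theorem statement14_general {σ R : Type*} [CommRing R] {I J A : Ideal (MvPolynomial σ R)}
    (hJI : J ≤ I) (hJ : IsHomogIdeal J) (hA : A ≤ MvPolynomial.idealOfVars σ R)
    (hIA : I ⊓ A = A * I) (hIJ : I ⊔ A = J ⊔ A) : I = J :=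
  have le_sup_mul : I ≤ J ⊔ A * I :=
    le_sup_mul_of_inf_le_mul hJI hIA.le (le_sup_left.trans hIJ.le)
  le_antisymm (hJ.le_of_le_sup_mul hA le_sup_mul) hJI

/-- Let `J ⊆ I` be homogeneous ideals of `K[x_1, ..., x_N]` and let
`f` be a non-constant homogeneous polynomial with `I ∩ (f) = f⬝I` and
`I + (f) = J + (f)`. Then `I = J`. -/
theorem statement14 (K : Type*) [Field K] (N : ℕ)
    (I J : Ideal (MvPolynomial (Fin N) K)) (hJI : J ≤ I)
    (hI : IsHomogIdeal I) (hJ : IsHomogIdeal J) (f : MvPolynomial (Fin N) K)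
    (hf : ∃ d : ℕ, f.IsHomogeneous d) (hfc : ∀ c : K, f ≠ MvPolynomial.C c)
    (h1 : I ⊓ Ideal.span {f} =
      Ideal.span {g : MvPolynomial (Fin N) K | ∃ i ∈ I, g = f * i})
    (h2 : I + Ideal.span {f} = J + Ideal.span {f}) :
    I = J := by
  obtain ⟨d, hd⟩ := hf
  have hfA : Ideal.span {f} ≤ MvPolynomial.idealOfVars (Fin N) K :=
    (Ideal.span_singleton_le_iff_mem _).mpr (mem_idealOfVars_of_isHomogeneous_of_ne_C hd hfc)
  exact statement14_general hJI hJ hfA (h1.trans (span_setOf_mul_eq_span_singleton_mul f I)) h2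

end Paper
end
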